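/- arXiv:1507.07831 — 3 statements merged into one kernel-verified Lean document; each statement's English description precedes it below -/
import Mathlib

section
/- Let d ≥ 2, let D ⊂ ℝ^d be a bounded open set, and set v(x) = -∫_D ∇N(x-y) dy. Let x ∉ ∂D and ε = dist(x, ∂D) > 0. Then v is differentiable at x and its partial derivatives satisfy: for 1 ≤ j,k ≤ d with j ≠ k, ∂v^j/∂x_k(x) = (d/ω_{d-1}) ∫_{D∖B(x,ε)} (x_j-y_j)(x_k-y_k)/|x-y|^{d+2} dy; and for 1 ≤ j ≤ d, ∂v^j/∂x_j(x) = -(1/d) χ_D(x) - (1/ω_{d-1}) ∫_{D∖B(x,ε)} (|x-y|² - d(x_j-y_j)²)/|x-y|^{d+2} dy. -/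
open MeasureTheory Metric Set
open scoped RealInnerProductSpace

noncomputable def sphereVol (d : ℕ) : ℝ :=
  d * (volume (Metric.ball (0 : EuclideanSpace ℝ (Fin d)) 1)).toReal

noncomputable def gradN (d : ℕ) (y : EuclideanSpace ℝ (Fin d)) : EuclideanSpace ℝ (Fin d) :=
  (sphereVol d * ‖y‖ ^ d)⁻¹ • y

noncomputable def hessN (d : ℕ) (z w : EuclideanSpace ℝ (Fin d)) : EuclideanSpace ℝ (Fin d) :=
  (sphereVol d)⁻¹ • ((‖z‖ ^ d)⁻¹ • w - ((d : ℝ) * (‖z‖ ^ (d + 2))⁻¹ * ⟪z, w⟫) • z)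

/-- `Φ` is a defining function of class `C^{1+γ}` for the set `D`. -/
def IsDefining (d : ℕ) (γ : ℝ) (D : Set (EuclideanSpace ℝ (Fin d)))
    (Φ : EuclideanSpace ℝ (Fin d) → ℝ) : Prop :=
  ContDiff ℝ 1 Φ ∧
  (∃ K : ℝ, ∀ x y, ‖gradient Φ x - gradient Φ y‖ ≤ K * ‖x - y‖ ^ γ) ∧
  D = {x | Φ x < 0} ∧
  frontier D = {x | Φ x = 0} ∧
  ∀ x ∈ frontier D, gradient Φ x ≠ 0

/-- `D` is a bounded domain of class `C^{1+γ}`. -/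
def IsC1Domain (d : ℕ) (γ : ℝ) (D : Set (EuclideanSpace ℝ (Fin d))) : Prop :=
  IsOpen D ∧ Bornology.IsBounded D ∧ ∃ Φ, IsDefining d γ D Φ



/-- radial weight supported on the annulus -/
noncomputable def annW (d : ℕ) (δ ε : ℝ) (r : ℝ) : ℝ :=
  if δ ≤ r ∧ r < ε then (r ^ (d + 2))⁻¹ else 0

noncomputable def regG (d : ℕ) (δ : ℝ) (u : EuclideanSpace ℝ (Fin d)) :
    EuclideanSpace ℝ (Fin d) :=
  (sphereVol d * (max ‖u‖ δ) ^ d)⁻¹ • u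

noncomputable def entH (d : ℕ) (δ : ℝ) (j k : Fin d) (u : EuclideanSpace ℝ (Fin d)) : ℝ :=
  if ‖u‖ < δ then (sphereVol d * δ ^ d)⁻¹ * (if j = k then 1 else 0)
  else (sphereVol d)⁻¹ * (((if j = k then ‖u‖ ^ 2 else 0) - d * (u j * u k)) / ‖u‖ ^ (d + 2))

lemma sphereVol_pos (d : ℕ) (hd : 2 ≤ d) : 0 < sphereVol d := by
  unfold sphereVol
  have h1 : 0 < (volume (Metric.ball (0 : EuclideanSpace ℝ (Fin d)) 1)).toReal :=
    ENNReal.toReal_pos (measure_ball_pos _ _ one_pos).ne' measure_ball_lt_top.ne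
  have : (0:ℝ) < d := by exact_mod_cast (by omega : 0 < d)
  positivity

lemma ann_integrable (d : ℕ) (δ ε : ℝ) (hδ : 0 < δ) (j k : Fin d) :
    Integrable (fun u : EuclideanSpace ℝ (Fin d) => annW d δ ε ‖u‖ * (u j * u k)) := by
  have hm : Measurable (annW d δ ε) := by
    unfold annW
    refine Measurable.ite ?_ (by fun_prop) measurable_const
    exact (measurableSet_Ici (a := δ)).inter (measurableSet_Iio (a := ε))
  refine Integrable.mono' (g := indicator (ball 0 ε) (fun _ => (δ ^ (d+2))⁻¹ * (ε * ε))) ?_ ?_ ?_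
  · exact (integrable_indicator_iff measurableSet_ball).2
      (integrableOn_const (measure_ball_lt_top.ne))
  · have : Measurable (fun u : EuclideanSpace ℝ (Fin d) => annW d δ ε ‖u‖) := hm.comp measurable_norm
    have h2 : Measurable (fun u : EuclideanSpace ℝ (Fin d) => u j * u k) := by
      apply Continuous.measurable; fun_prop
    exact (this.mul h2).aestronglyMeasurable
  · refine Filter.Eventually.of_forall fun u => ?_
    unfold annW
    by_cases h : δ ≤ ‖u‖ ∧ ‖u‖ < ε
    · rw [if_pos h, indicator_of_mem (by simpa using h.2), norm_mul, norm_mul]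
      have h1 := (PiLp.norm_apply_le u j).trans h.2.le
      have h2 := (PiLp.norm_apply_le u k).trans h.2.le
      have h3 : ‖(‖u‖ ^ (d+2))⁻¹‖ ≤ (δ ^ (d+2))⁻¹ := by
        rw [Real.norm_of_nonneg (by positivity)]
        have := h.1
        gcongr
      have : 0 ≤ ε := (norm_nonneg _).trans h.2.le
      gcongr
    · rw [if_neg h]
      simp only [zero_mul, norm_zero]
      apply indicator_nonneg
      intro _ _
      exact mul_nonneg (by positivity) (mul_self_nonneg ε)

lemma ann_offdiag (d : ℕ) (δ ε : ℝ) (j k : Fin d) (hjk : j ≠ k) :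
    ∫ u : EuclideanSpace ℝ (Fin d), annW d δ ε ‖u‖ * (u j * u k) = 0 := by
  let T : (EuclideanSpace ℝ (Fin d)) ≃ₗᵢ[ℝ] (EuclideanSpace ℝ (Fin d)) :=
    LinearIsometryEquiv.piLpCongrRight 2
      (fun i => if i = j then LinearIsometryEquiv.neg ℝ else LinearIsometryEquiv.refl ℝ ℝ)
  have h := T.measurePreserving.integral_comp T.toHomeomorph.measurableEmbedding
    (fun u : EuclideanSpace ℝ (Fin d) => annW d δ ε ‖u‖ * (u j * u k))
  have hj : ∀ u, T u j = - u j := fun u => by simp [T]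
  have hk : ∀ u, T u k = u k := fun u => by simp [T, hjk.symm]
  simp only [LinearIsometryEquiv.norm_map, hj, hk] at h
  have h2 : ∀ u : EuclideanSpace ℝ (Fin d), annW d δ ε ‖u‖ * (-u j * u k) =
    - (annW d δ ε ‖u‖ * (u j * u k)) := fun u => by ring
  simp only [h2, integral_neg] at h
  linarith

lemma ann_diag_eq (d : ℕ) (δ ε : ℝ) (j k : Fin d) :
    ∫ u : EuclideanSpace ℝ (Fin d), annW d δ ε ‖u‖ * (u j * u j) =
    ∫ u : EuclideanSpace ℝ (Fin d), annW d δ ε ‖u‖ * (u k * u k) := by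
  let T : (EuclideanSpace ℝ (Fin d)) ≃ₗᵢ[ℝ] (EuclideanSpace ℝ (Fin d)) :=
    LinearIsometryEquiv.piLpCongrLeft 2 ℝ ℝ (Equiv.swap j k)
  have h := T.measurePreserving.integral_comp T.toHomeomorph.measurableEmbedding
    (fun u : EuclideanSpace ℝ (Fin d) => annW d δ ε ‖u‖ * (u j * u j))
  have hj : ∀ u, T u j = u k := fun u => by simp [T, Equiv.piCongrLeft']
  simp only [LinearIsometryEquiv.norm_map, hj] at h
  exact h.symm

lemma norm_sq_sum (d : ℕ) (u : EuclideanSpace ℝ (Fin d)) : ‖u‖ ^ 2 = ∑ i, u i * u i := by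
  rw [EuclideanSpace.norm_sq_eq]
  refine Finset.sum_congr rfl fun i _ => ?_
  rw [Real.norm_eq_abs, sq_abs, sq]

lemma ann_norm_integrable (d : ℕ) (δ ε : ℝ) (hδ : 0 < δ) :
    Integrable (fun u : EuclideanSpace ℝ (Fin d) => annW d δ ε ‖u‖ * ‖u‖ ^ 2) := by
  simp only [norm_sq_sum d, Finset.mul_sum]
  exact integrable_finsetSum _ fun i _ => ann_integrable d δ ε hδ i i

lemma ann_norm (d : ℕ) (δ ε : ℝ) (hδ : 0 < δ) (j : Fin d) :
    ∫ u : EuclideanSpace ℝ (Fin d), annW d δ ε ‖u‖ * ‖u‖ ^ 2 =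
      d * ∫ u : EuclideanSpace ℝ (Fin d), annW d δ ε ‖u‖ * (u j * u j) := by
  have : ∀ u : EuclideanSpace ℝ (Fin d), annW d δ ε ‖u‖ * ‖u‖ ^ 2 =
    ∑ i, annW d δ ε ‖u‖ * (u i * u i) := fun u => by rw [norm_sq_sum, Finset.mul_sum]
  simp only [this]
  rw [integral_finsetSum _ fun i _ => ann_integrable d δ ε hδ i i,
    Finset.sum_congr rfl fun i _ => ann_diag_eq d δ ε i j]
  simp

lemma entH_ball (d : ℕ) (hd : 2 ≤ d) (δ ε : ℝ) (hδ : 0 < δ) (hε : δ < ε) (j k : Fin d) :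
    ∫ u in ball (0 : EuclideanSpace ℝ (Fin d)) ε, entH d δ j k u =
      if j = k then 1 / (d : ℝ) else 0 := by
  have hω := sphereVol_pos d hd
  rw [← integral_indicator measurableSet_ball]
  have key : ∀ u : EuclideanSpace ℝ (Fin d), indicator (ball 0 ε) (entH d δ j k) u =
      indicator (ball 0 δ) (fun _ => (sphereVol d * δ ^ d)⁻¹ * (if j = k then 1 else 0)) u +
      (sphereVol d)⁻¹ * ((if j = k then (1:ℝ) else 0) * (annW d δ ε ‖u‖ * ‖u‖ ^ 2) -
        d * (annW d δ ε ‖u‖ * (u j * u k))) := by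
    intro u
    by_cases h1 : ‖u‖ < δ
    · rw [indicator_of_mem (by simpa using h1.trans hε), indicator_of_mem (by simpa using h1)]
      simp [entH, annW, h1, not_le.2 h1]
    · rw [indicator_of_notMem (s := ball 0 δ) (by simpa using h1)]
      by_cases h2 : ‖u‖ < ε
      · rw [indicator_of_mem (by simpa using h2)]
        simp only [entH, annW, h1, h2, not_lt.1 h1, if_true, if_false, and_self]
        split_ifs <;> ring
      · rw [indicator_of_notMem (by simpa using h2)]
        simp [annW, h2]
  simp only [key]
  have i1 : Integrable (indicator (ball (0 : EuclideanSpace ℝ (Fin d)) δ)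
      (fun _ => (sphereVol d * δ ^ d)⁻¹ * (if j = k then (1:ℝ) else 0))) :=
    (integrable_indicator_iff measurableSet_ball).2 (integrableOn_const (measure_ball_lt_top.ne))
  have i2 := (ann_norm_integrable d δ ε hδ).const_mul (if j = k then (1:ℝ) else 0)
  have i3 := (ann_integrable d δ ε hδ j k).const_mul (d:ℝ)
  have i4 : Integrable (fun u : EuclideanSpace ℝ (Fin d) =>
      (sphereVol d)⁻¹ * ((if j = k then (1:ℝ) else 0) * (annW d δ ε ‖u‖ * ‖u‖ ^ 2) -
        d * (annW d δ ε ‖u‖ * (u j * u k)))) := (i2.sub i3).const_mul _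
  rw [integral_add i1 i4, integral_const_mul, integral_sub i2 i3,
    integral_const_mul, integral_const_mul, integral_indicator measurableSet_ball]
  rw [setIntegral_const]
  by_cases h : j = k
  · subst h
    rw [ann_norm d δ ε hδ j]
    have hv : volume.real (ball (0 : EuclideanSpace ℝ (Fin d)) δ) =
        δ ^ d * (volume (ball (0 : EuclideanSpace ℝ (Fin d)) 1)).toReal := by
      rw [Measure.real, Measure.addHaar_ball_of_pos _ _ hδ, ENNReal.toReal_mul,
        ENNReal.toReal_ofReal (by positivity), finrank_euclideanSpace_fin]
    rw [hv]
    have hd0 : (d:ℝ) ≠ 0 := by positivity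
    have hne : (volume (ball (0 : EuclideanSpace ℝ (Fin d)) 1)).toReal ≠ 0 := by
      intro h0; simp [sphereVol, h0] at hω
    have hδd : δ ^ d ≠ 0 := by positivity
    simp only [if_true, smul_eq_mul, one_mul, sub_self, mul_zero, add_zero, sphereVol]
    field_simp
  · rw [ann_offdiag d δ ε j k h]
    simp [h]

lemma scal_lip (d : ℕ) (δ a b : ℝ) (hδ : 0 < δ) (ha : δ ≤ a) (hab : a ≤ b) :
    a * ((a ^ d)⁻¹ - (b ^ d)⁻¹) ≤ d * (δ ^ d)⁻¹ * (b - a) := by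
  have ha0 : 0 < a := hδ.trans_le ha
  have hb0 : 0 < b := ha0.trans_le hab
  have h1 := one_add_mul_le_pow (a := a / b - 1)
    (by have : 0 ≤ a / b := by positivity
        linarith) d
  rw [add_sub_cancel] at h1
  have e : a * ((a ^ d)⁻¹ - (b ^ d)⁻¹) = (a ^ d)⁻¹ * (a * (1 - (a / b) ^ d)) := by
    rw [div_pow]; field_simp
  rw [e]
  have h2 : a * (1 - (a / b) ^ d) ≤ d * (b - a) := by
    calc a * (1 - (a / b) ^ d) ≤ a * (d * (1 - a / b)) := by
          gcongr; linarith
      _ = (a / b) * (d * (b - a)) := by field_simp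
      _ ≤ 1 * (d * (b - a)) := by
          have : 0 ≤ b - a := by linarith
          gcongr
          exact (div_le_one hb0).2 hab
      _ = _ := one_mul _
  have h3 : (a ^ d)⁻¹ ≤ (δ ^ d)⁻¹ := by gcongr
  calc _ ≤ (a ^ d)⁻¹ * (d * (b - a)) := by gcongr
    _ ≤ (δ ^ d)⁻¹ * (d * (b - a)) := by
      have : 0 ≤ b - a := by linarith
      gcongr
    _ = _ := by ring

lemma regG_lip (d : ℕ) (hd : 2 ≤ d) (δ : ℝ) (hδ : 0 < δ) (u v : EuclideanSpace ℝ (Fin d)) :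
    ‖regG d δ u - regG d δ v‖ ≤ ((sphereVol d)⁻¹ * ((d + 1) * (δ ^ d)⁻¹)) * ‖u - v‖ := by
  have hω := sphereVol_pos d hd
  wlog huv : ‖u‖ ≤ ‖v‖ generalizing u v
  · rw [norm_sub_rev, norm_sub_rev u v]
    exact this v u (le_of_not_ge huv)
  set a := max ‖u‖ δ with ha
  set b := max ‖v‖ δ with hb
  have hδa : δ ≤ a := le_max_right _ _
  have hδb : δ ≤ b := le_max_right _ _
  have hab : a ≤ b := max_le_max_right _ huv
  have hba : b - a ≤ ‖u - v‖ := by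
    have h1 : ‖v‖ ≤ ‖u‖ + ‖u - v‖ := by
      have := norm_sub_norm_le v u
      rw [norm_sub_rev] at this; linarith
    have : b ≤ a + ‖u - v‖ := by
      apply max_le
      · exact h1.trans (by gcongr; exact le_max_left _ _)
      · linarith [norm_nonneg (u - v)]
    linarith
  have ha0 : 0 < a := hδ.trans_le hδa
  have hb0 : 0 < b := hδ.trans_le hδb
  have e : regG d δ u - regG d δ v =
      (sphereVol d)⁻¹ • (((a ^ d)⁻¹ - (b ^ d)⁻¹) • u + (b ^ d)⁻¹ • (u - v)) := by
    simp only [regG, ← ha, ← hb, mul_inv, smul_add, smul_sub, sub_smul, smul_smul]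
    abel
  have hnn : 0 ≤ (a ^ d)⁻¹ - (b ^ d)⁻¹ := by
    rw [sub_nonneg]; gcongr
  rw [e, norm_smul, Real.norm_of_nonneg (by positivity), mul_assoc]
  gcongr
  refine (norm_add_le _ _).trans ?_
  rw [norm_smul, norm_smul, Real.norm_of_nonneg hnn, Real.norm_of_nonneg (by positivity)]
  have h1 : ((a ^ d)⁻¹ - (b ^ d)⁻¹) * ‖u‖ ≤ a * ((a ^ d)⁻¹ - (b ^ d)⁻¹) := by
    rw [mul_comm]; gcongr; exact le_max_left _ _
  have h2 := scal_lip d δ a b hδ hδa hab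
  have h3 : (b ^ d)⁻¹ ≤ (δ ^ d)⁻¹ := by gcongr
  have h4 : d * (δ ^ d)⁻¹ * (b - a) ≤ d * (δ ^ d)⁻¹ * ‖u - v‖ := by gcongr
  have h5 : (b ^ d)⁻¹ * ‖u - v‖ ≤ (δ ^ d)⁻¹ * ‖u - v‖ := by gcongr
  linarith

lemma regG_deriv (d : ℕ) (hd : 2 ≤ d) (δ : ℝ) (hδ : 0 < δ) (u : EuclideanSpace ℝ (Fin d))
    (hu : ‖u‖ ≠ δ) : DifferentiableAt ℝ (regG d δ) u ∧
      ∀ j k : Fin d, fderiv ℝ (regG d δ) u (EuclideanSpace.single k 1) j = entH d δ j k u := by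
  have hω := sphereVol_pos d hd
  rcases lt_or_gt_of_ne hu with h | h
  · have he : regG d δ =ᶠ[nhds u] fun w => (sphereVol d * δ ^ d)⁻¹ • w := by
      have : ∀ᶠ w in nhds u, ‖w‖ < δ := (continuous_norm.tendsto u).eventually_lt_const h
      filter_upwards [this] with w hw
      rw [regG, max_eq_right hw.le]
    have hd1 : HasFDerivAt (regG d δ) ((sphereVol d * δ ^ d)⁻¹ •
        ContinuousLinearMap.id ℝ (EuclideanSpace ℝ (Fin d))) u :=
      ((hasFDerivAt_id u).const_smul _).congr_of_eventuallyEq he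
    refine ⟨hd1.differentiableAt, fun j k => ?_⟩
    rw [hd1.fderiv]
    simp [entH, h]
  · have he : regG d δ =ᶠ[nhds u] fun w => (sphereVol d * ‖w‖ ^ d)⁻¹ • w := by
      have : ∀ᶠ w in nhds u, δ < ‖w‖ := (continuous_norm.tendsto u).eventually_const_lt h
      filter_upwards [this] with w hw
      rw [regG, max_eq_left hw.le]
    have hu0 : 0 < ‖u‖ := hδ.trans h
    have h1 := hasFDerivAt_norm_rpow (E := EuclideanSpace ℝ (Fin d)) u (p := d)
      (by exact_mod_cast (by omega : 1 < d))
    simp only [Real.rpow_natCast] at h1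
    have hne : sphereVol d * ‖u‖ ^ d ≠ 0 := by positivity
    have h2 := (hasDerivAt_inv hne).comp_hasFDerivAt u (h1.const_mul (sphereVol d))
    have h3 := (h2.smul (hasFDerivAt_id u)).congr_of_eventuallyEq (f₁ := regG d δ) (by
      filter_upwards [he] with w hw
      rw [hw]; rfl)
    refine ⟨h3.differentiableAt, fun j k => ?_⟩
    rw [h3.fderiv]
    have hp : ‖u‖ ^ ((d:ℝ) - 2) = ‖u‖ ^ d / ‖u‖ ^ 2 := by
      rw [Real.rpow_sub hu0, Real.rpow_natCast]; norm_num
    have hin : ⟪u, EuclideanSpace.single k (1:ℝ)⟫ = u k := by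
      rw [EuclideanSpace.inner_single_right]; simp
    simp [entH, not_lt.2 h.le, hp, hin]
    split_ifs
    · field_simp
      try ring
    · field_simp
      try ring

lemma regG_cont (d : ℕ) (δ : ℝ) (hd : 2 ≤ d) (hδ : 0 < δ) : Continuous (regG d δ) := by
  have hω := sphereVol_pos d hd
  unfold regG
  have hc : Continuous (fun u : EuclideanSpace ℝ (Fin d) => sphereVol d * (max ‖u‖ δ) ^ d) := by
    fun_prop
  refine Continuous.smul (hc.inv₀ fun u => ?_) continuous_id
  have : 0 < max ‖u‖ δ := lt_max_of_lt_right hδ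
  positivity

/-- the odd compactly supported difference -/
noncomputable def diffK (d : ℕ) (δ : ℝ) (u : EuclideanSpace ℝ (Fin d)) :
    EuclideanSpace ℝ (Fin d) := gradN d u - regG d δ u

lemma diffK_zero (d : ℕ) (δ : ℝ) (u : EuclideanSpace ℝ (Fin d)) (h : δ ≤ ‖u‖) :
    diffK d δ u = 0 := by
  simp [diffK, gradN, regG, max_eq_left h]

lemma diffK_integrable (d : ℕ) (hd : 2 ≤ d) (δ : ℝ) (hδ : 0 < δ) : Integrable (diffK d δ) := by
  have hω := sphereVol_pos d hd
  have : Nonempty (Fin d) := ⟨⟨0, by omega⟩⟩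
  let g : ℝ → ℝ := indicator (Iio δ) (fun r => (sphereVol d)⁻¹ * (r ^ (d - 1))⁻¹)
  have hg : Integrable (fun u : EuclideanSpace ℝ (Fin d) => g ‖u‖) := by
    rw [integrable_fun_norm_addHaar volume (f := g), finrank_euclideanSpace_fin]
    have : EqOn (fun y : ℝ => y ^ (d - 1) • g y)
        (indicator (Iio δ) (fun _ => (sphereVol d)⁻¹)) (Ioi 0) := by
      intro y hy
      have hy : 0 < y := hy
      by_cases h : y ∈ Iio δ
      · simp only [g, indicator_of_mem h, smul_eq_mul]
        field_simp
      · simp [g, indicator_of_notMem h]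
    rw [integrableOn_congr_fun this measurableSet_Ioi, integrableOn_indicator_iff measurableSet_Iio]
    refine integrableOn_const ?_
    rw [Iio_inter_Ioi]
    exact measure_Ioo_lt_top.ne
  refine hg.mono' ?_ (Filter.Eventually.of_forall fun u => ?_)
  · have h1 : Measurable (gradN d) := by unfold gradN; fun_prop
    exact (h1.sub (regG_cont d δ hd hδ).measurable).aestronglyMeasurable
  · by_cases h : ‖u‖ < δ
    · simp only [g, indicator_of_mem (show ‖u‖ ∈ Iio δ from h)]
      rcases eq_or_ne u 0 with rfl | hu
      · simp [diffK, gradN, regG]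
        positivity
      have hu0 : 0 < ‖u‖ := norm_pos_iff.2 hu
      rw [diffK, gradN, regG, max_eq_right h.le, ← sub_smul, norm_smul, Real.norm_of_nonneg]
      · have e : (sphereVol d)⁻¹ * (‖u‖ ^ (d-1))⁻¹ = (sphereVol d * ‖u‖ ^ d)⁻¹ * ‖u‖ := by
          obtain ⟨n, rfl⟩ : ∃ n, d = n + 1 := ⟨d - 1, by omega⟩
          simp only [Nat.add_sub_cancel, pow_succ]
          field_simp
        rw [e]
        gcongr
        have : 0 ≤ (sphereVol d * δ ^ d)⁻¹ := by positivity
        linarith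
      · rw [sub_nonneg]
        gcongr
    · rw [diffK_zero d δ u (not_lt.1 h)]
      simp [g, h]

lemma diffK_integral (d : ℕ) (δ : ℝ) : ∫ u, diffK d δ u = 0 := by
  have h : ∫ u, diffK d δ (-u) = ∫ u, diffK d δ u := integral_neg_eq_self _ _
  have h2 : ∀ u, diffK d δ (-u) = - diffK d δ u := fun u => by
    simp [diffK, gradN, regG]; abel
  simp only [h2, integral_neg] at h
  have h3 : (2:ℝ) • ∫ u, diffK d δ u = 0 := by
    rw [two_smul]
    nth_rewrite 1 [← h]
    simp
  simpa using h3

lemma grad_eq_reg (d : ℕ) (hd : 2 ≤ d) (δ : ℝ) (hδ : 0 < δ) (D : Set (EuclideanSpace ℝ (Fin d)))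
    (hDb : Bornology.IsBounded D) (z : EuclideanSpace ℝ (Fin d))
    (hz : ball z δ ⊆ D ∨ Disjoint (ball z δ) D) :
    ∫ y in D, gradN d (z - y) = ∫ y in D, regG d δ (z - y) := by
  have hK : Integrable (fun y => diffK d δ (z - y)) :=
    (diffK_integrable d hd δ hδ).comp_sub_left z
  have hK0 : ∫ y in D, diffK d δ (z - y) = 0 := by
    rcases hz with h | h
    · rw [setIntegral_eq_integral_of_forall_compl_eq_zero, integral_sub_left_eq_self (diffK d δ),
        diffK_integral]
      intro y hy
      apply diffK_zero
      by_contra hlt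
      exact hy (h (by rw [mem_ball, dist_comm, dist_eq_norm]; exact not_le.1 hlt))
    · apply setIntegral_eq_zero_of_forall_eq_zero
      intro y hy
      apply diffK_zero
      by_contra hlt
      exact h.notMem_of_mem_left (by rw [mem_ball, dist_comm, dist_eq_norm]; exact not_le.1 hlt) hy
  have hG : IntegrableOn (fun y => regG d δ (z - y)) D := by
    have hc : Continuous (fun y => regG d δ (z - y)) :=
      (regG_cont d δ hd hδ).comp (continuous_const.sub continuous_id)
    exact (hc.continuousOn.integrableOn_compact hDb.isCompact_closure).mono_set subset_closure
  have : ∀ y, gradN d (z - y) = diffK d δ (z - y) + regG d δ (z - y) := fun y => by simp [diffK]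
  simp only [this]
  rw [integral_add hK.integrableOn hG, hK0, zero_add]

lemma ball_dichotomy {E : Type*} [NormedAddCommGroup E] [NormedSpace ℝ E] (D : Set E)
    (hDo : IsOpen D) (x : E) :
    (x ∈ D → ball x (infDist x (frontier D)) ⊆ D) ∧
    (x ∉ D → Disjoint (ball x (infDist x (frontier D))) D) := by
  set B := ball x (infDist x (frontier D)) with hB
  have hBc : IsPreconnected B := (convex_ball _ _).isPreconnected
  have hdis : Disjoint B (frontier D) := disjoint_ball_infDist
  have hcov : B ⊆ D ∪ (closure D)ᶜ := by
    intro y hy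
    by_cases h : y ∈ D
    · exact Or.inl h
    · right
      intro hc
      exact hdis.notMem_of_mem_left hy ⟨hc, by rwa [hDo.interior_eq]⟩
  have hdD : Disjoint D (closure D)ᶜ := disjoint_compl_right.mono_left subset_closure
  rcases B.eq_empty_or_nonempty with h0 | h0
  · rw [h0]; simp
  have hxB : x ∈ B := by
    rw [hB] at h0 ⊢
    exact mem_ball_self (nonempty_ball.1 h0)
  have := hBc.subset_or_subset hDo isClosed_closure.isOpen_compl hdD hcov
  rcases this with h | h
  · exact ⟨fun _ => h, fun hx => absurd (h hxB) hx⟩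
  · exact ⟨fun hx => absurd (subset_closure hx) (h hxB),
      fun _ => (disjoint_compl_left.mono_left h).mono_right subset_closure⟩

lemma reg_hasFDeriv (d : ℕ) (hd : 2 ≤ d) (δ : ℝ) (hδ : 0 < δ) (D : Set (EuclideanSpace ℝ (Fin d)))
    (hDb : Bornology.IsBounded D) (x : EuclideanSpace ℝ (Fin d)) :
    Integrable (fun y => fderiv ℝ (regG d δ) (x - y)) (volume.restrict D) ∧
    HasFDerivAt (fun z => ∫ y in D, regG d δ (z - y))
      (∫ y in D, fderiv ℝ (regG d δ) (x - y)) x ∧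
    ∀ᵐ y ∂(volume.restrict D), ‖x - y‖ ≠ δ := by
  have : Nonempty (Fin d) := ⟨⟨0, by omega⟩⟩
  have hc : ∀ z, Continuous (fun y => regG d δ (z - y)) := fun z =>
    (regG_cont d δ hd hδ).comp (continuous_const.sub continuous_id)
  have hae : ∀ᵐ y ∂(volume.restrict D), ‖x - y‖ ≠ δ := by
    apply ae_restrict_of_ae
    have h0 := Measure.addHaar_sphere (volume : Measure (EuclideanSpace ℝ (Fin d))) x δ
    rw [measure_eq_zero_iff_ae_notMem] at h0
    filter_upwards [h0] with y hy h
    apply hy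
    rw [mem_sphere, dist_comm, dist_eq_norm, h]
  have hfin : volume D ≠ ⊤ := hDb.measure_lt_top.ne
  have key := hasFDerivAt_integral_of_dominated_loc_of_lip' (𝕜 := ℝ) (μ := volume.restrict D)
    (F := fun z y => regG d δ (z - y)) (F' := fun y => fderiv ℝ (regG d δ) (x - y)) (x₀ := x)
    (s := univ) (bound := fun _ => (sphereVol d)⁻¹ * ((d + 1) * (δ ^ d)⁻¹)) Filter.univ_mem
    (fun z _ => (hc z).aestronglyMeasurable)
    (((hc x).continuousOn.integrableOn_compact hDb.isCompact_closure).mono_set subset_closure)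
    ((measurable_fderiv ℝ (regG d δ)).comp (measurable_const.sub measurable_id)).aestronglyMeasurable
    (Filter.Eventually.of_forall fun y z _ => by
      have := regG_lip d hd δ hδ (z - y) (x - y)
      rwa [sub_sub_sub_cancel_right] at this)
    (integrableOn_const hfin)
    (by
      filter_upwards [hae] with y hy
      have h1 := (regG_deriv d hd δ hδ (x - y) hy).1.hasFDerivAt
      have h2 : HasFDerivAt (fun z => z - y)
        (ContinuousLinearMap.id ℝ (EuclideanSpace ℝ (Fin d))) x := (hasFDerivAt_id x).sub_const y
      exact h1.comp x h2)
  exact ⟨key.1, key.2, hae⟩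

/-- Lemma 7.1: formulas for the partial derivatives of the patch velocity off the boundary. -/
theorem patch_velocity_gradient_formulas
    (d : ℕ) (hd : 2 ≤ d)
    (D : Set (EuclideanSpace ℝ (Fin d))) (hDo : IsOpen D) (hDb : Bornology.IsBounded D)
    (x : EuclideanSpace ℝ (Fin d)) (hx : x ∉ frontier D)
    (hε : 0 < Metric.infDist x (frontier D)) :
    ∃ L : EuclideanSpace ℝ (Fin d) →L[ℝ] EuclideanSpace ℝ (Fin d),
      HasFDerivAt (fun z => -(∫ y in D, gradN d (z - y))) L x ∧
      (∀ j k : Fin d, j ≠ k →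
        L (EuclideanSpace.single k 1) j =
          ((d : ℝ) / sphereVol d) *
            ∫ y in D \ Metric.ball x (Metric.infDist x (frontier D)),
              (x j - y j) * (x k - y k) / ‖x - y‖ ^ (d + 2)) ∧
      (∀ j : Fin d,
        L (EuclideanSpace.single j 1) j =
          -(1 / (d : ℝ)) * Set.indicator D (fun _ => (1:ℝ)) x -
            (1 / sphereVol d) *
              ∫ y in D \ Metric.ball x (Metric.infDist x (frontier D)),
                (‖x - y‖ ^ 2 - (d : ℝ) * (x j - y j) ^ 2) / ‖x - y‖ ^ (d + 2)) := by
  obtain ⟨hin, hout⟩ := ball_dichotomy D hDo x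
  set ε := infDist x (frontier D) with hεdef
  obtain ⟨δ, hδ, hδε⟩ : ∃ δ, 0 < δ ∧ δ < ε := ⟨ε / 2, by linarith, by linarith⟩
  obtain ⟨hint, hder, hae⟩ := reg_hasFDeriv d hd δ hδ D hDb x
  have hentry : ∀ j k : Fin d,
      (-∫ y in D, fderiv ℝ (regG d δ) (x - y)) (EuclideanSpace.single k 1) j =
        -(if j = k then 1 / (d:ℝ) else 0) * Set.indicator D (fun _ => (1:ℝ)) x -
        (sphereVol d)⁻¹ * ∫ y in D \ ball x ε,
          ((if j = k then ‖x - y‖ ^ 2 else 0) - d * ((x j - y j) * (x k - y k)))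
            / ‖x - y‖ ^ (d + 2) := by
    intro j k
    let P : (EuclideanSpace ℝ (Fin d) →L[ℝ] EuclideanSpace ℝ (Fin d)) →L[ℝ] ℝ :=
      (EuclideanSpace.proj j : EuclideanSpace ℝ (Fin d) →L[ℝ] ℝ).comp
        (ContinuousLinearMap.apply ℝ (EuclideanSpace ℝ (Fin d)) (EuclideanSpace.single k 1))
    have hP : ∀ A, P A = A (EuclideanSpace.single k 1) j := fun A => rfl
    have haeq : (fun y => P (fderiv ℝ (regG d δ) (x - y))) =ᵐ[volume.restrict D]
        fun y => entH d δ j k (x - y) := by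
      filter_upwards [hae] with y hy
      exact (regG_deriv d hd δ hδ (x - y) hy).2 j k
    have hI : IntegrableOn (fun y => entH d δ j k (x - y)) D :=
      (P.integrable_comp hint).congr haeq
    rw [← hP, map_neg, ← P.integral_comp_comm hint, integral_congr_ae haeq]
    have hsplit := integral_inter_add_sdiff (measurableSet_ball (x := x) (ε := ε)) hI
    have hball : ∫ y in D ∩ ball x ε, entH d δ j k (x - y) =
        (if j = k then 1 / (d:ℝ) else 0) * Set.indicator D (fun _ => (1:ℝ)) x := by
      by_cases hxD : x ∈ D
      · rw [inter_eq_right.2 (hin hxD), indicator_of_mem hxD, mul_one,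
          ← entH_ball d hd δ ε hδ hδε j k, ← integral_indicator measurableSet_ball,
          ← integral_indicator measurableSet_ball,
          ← integral_sub_left_eq_self ((ball 0 ε).indicator fun u => entH d δ j k u) volume x]
        congr 1
        ext y
        by_cases hy : y ∈ ball x ε
        · rw [indicator_of_mem hy, indicator_of_mem]
          rwa [mem_ball_zero_iff, ← dist_eq_norm, dist_comm]
        · rw [indicator_of_notMem hy, indicator_of_notMem]
          rwa [mem_ball_zero_iff, ← dist_eq_norm, dist_comm]
      · rw [inter_comm, (hout hxD).inter_eq, indicator_of_notMem hxD]
        simp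
    have hrest : ∫ y in D \ ball x ε, entH d δ j k (x - y) =
        (sphereVol d)⁻¹ * ∫ y in D \ ball x ε,
          ((if j = k then ‖x - y‖ ^ 2 else 0) - d * ((x j - y j) * (x k - y k)))
            / ‖x - y‖ ^ (d + 2) := by
      rw [← integral_const_mul]
      refine setIntegral_congr_fun (hDo.measurableSet.diff measurableSet_ball) fun y hy => ?_
      have : ε ≤ ‖x - y‖ := by
        have := hy.2
        rwa [mem_ball, not_lt, dist_comm, dist_eq_norm] at this
      have h : ¬ ‖x - y‖ < δ := by linarith
      simp only [entH, h, if_false, PiLp.sub_apply]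
    rw [← hsplit, hball, hrest]
    ring
  refine ⟨-∫ y in D, fderiv ℝ (regG d δ) (x - y), ?_, fun j k hjk => ?_, fun j => ?_⟩
  · refine hder.neg.congr_of_eventuallyEq ?_
    filter_upwards [ball_mem_nhds x (sub_pos.2 hδε)] with z hz
    have hsub : ball z δ ⊆ ball x ε := ball_subset_ball' (by
      rw [mem_ball] at hz; linarith)
    have := grad_eq_reg d hd δ hδ D hDb z (by
      by_cases hxD : x ∈ D
      · exact Or.inl (hsub.trans (hin hxD))
      · exact Or.inr ((hout hxD).mono_left hsub))
    simp only [this, Pi.neg_apply]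
  · rw [hentry j k]
    simp only [hjk, if_false]
    rw [← integral_const_mul, ← integral_const_mul, neg_zero, zero_mul, zero_sub, ← integral_neg]
    congr 1
    ext y
    ring
  · rw [hentry j j]
    simp only [if_true, one_div, sq]
end

section
/- A priori Hölder bound for the transported defining function: assume the patch flow setup on [0,T], let g : [0,T] → [0,∞) be integrable with v(·,s) Lipschitz of constant at most g(s) for each s, and let Φ : ℝ^d × [0,T] → ℝ be continuous such that for each t the function Φ(·,t) is a defining function for D_t of class C^{1+γ} and, for every α ∈ ℝ^d and t ∈ [0,T], the map t ↦ ∇Φ(X(α,t),t) is differentiable with derivative ∫_{D_t} ∇²N(X(α,t)-y) (∇Φ(X(α,t),t) - ∇Φ(y,t)) dy. Then there is a constant C depending only on d and γ such that for all t ∈ [0,T], ‖∇Φ(·,t)‖_γ ≤ ‖∇Φ(·,0)‖_γ · exp( C ∫_0^t (1 + g(s)) ds ). -/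
open MeasureTheory Metric Set
open scoped RealInnerProductSpace

section Kernel

lemma measurable_gradN (d : ℕ) : Measurable (gradN d) := by unfold gradN; fun_prop

lemma measurable_hessN (d : ℕ) : Measurable
    (fun p : EuclideanSpace ℝ (Fin d) × EuclideanSpace ℝ (Fin d) => hessN d p.1 p.2) := by
  unfold hessN; fun_prop

lemma hessN_sub (d : ℕ) (z w w' : EuclideanSpace ℝ (Fin d)) :
    hessN d z (w - w') = hessN d z w - hessN d z w' := by
  unfold hessN
  rw [inner_sub_right]
  module

lemma hessN_smul (d : ℕ) (z w : EuclideanSpace ℝ (Fin d)) (c : ℝ) :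
    hessN d z (c • w) = c • hessN d z w := by
  unfold hessN
  rw [inner_smul_right]
  module

lemma norm_gradN_le (d : ℕ) (hd : 2 ≤ d) (z : EuclideanSpace ℝ (Fin d)) :
    ‖gradN d z‖ ≤ (sphereVol d)⁻¹ * ‖z‖ ^ (-((d : ℝ) - 1)) := by
  have hs := sphereVol_pos d hd
  rcases eq_or_ne z 0 with rfl | hz
  · simp only [gradN, smul_zero, norm_zero]; positivity
  have hz' : 0 < ‖z‖ := norm_pos_iff.2 hz
  unfold gradN
  rw [norm_smul, norm_inv, Real.norm_of_nonneg (by positivity), neg_sub, Real.rpow_sub hz',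
    Real.rpow_one, Real.rpow_natCast]
  apply le_of_eq
  field_simp

lemma norm_hessN_le (d : ℕ) (hd : 2 ≤ d) (z w : EuclideanSpace ℝ (Fin d)) :
    ‖hessN d z w‖ ≤ (sphereVol d)⁻¹ * (1 + d) * ‖w‖ * ‖z‖ ^ (-(d : ℝ)) := by
  have hs := sphereVol_pos d hd
  rcases eq_or_ne z 0 with rfl | hz
  · have : (d:ℕ) ≠ 0 := by omega
    simp only [hessN, smul_zero, norm_zero]
    simp [this]
  have hz' : 0 < ‖z‖ := norm_pos_iff.2 hz
  unfold hessN
  rw [norm_smul, norm_inv, Real.norm_of_nonneg hs.le, Real.rpow_neg hz'.le, Real.rpow_natCast,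
    mul_assoc (sphereVol d)⁻¹, mul_assoc (sphereVol d)⁻¹]
  apply mul_le_mul_of_nonneg_left _ (inv_pos.2 hs).le
  refine (norm_sub_le _ _).trans ?_
  rw [norm_smul, norm_smul, norm_inv, norm_mul, norm_mul, norm_inv, norm_pow, norm_pow, norm_norm]
  have h1 : ‖⟪z, w⟫‖ ≤ ‖z‖ * ‖w‖ := norm_inner_le_norm z w
  have h2 : ‖(d:ℝ)‖ = d := by simp
  rw [h2]
  calc _ ≤ (‖z‖ ^ d)⁻¹ * ‖w‖ + d * (‖z‖ ^ (d+2))⁻¹ * (‖z‖ * ‖w‖) * ‖z‖ := by gcongr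
    _ = _ := by rw [pow_add]; field_simp

lemma inv_pow_sub_le (n : ℕ) {a b M : ℝ} (ha : 0 < a) (hb : 0 < b) (haM : a⁻¹ ≤ M)
    (hbM : b⁻¹ ≤ M) : |(a ^ n)⁻¹ - (b ^ n)⁻¹| ≤ n * M ^ (n + 1) * |a - b| := by
  have hM : 0 < M := lt_of_lt_of_le (inv_pos.2 ha) haM
  rcases n with _ | n
  · simp
  rw [← inv_pow, ← inv_pow]
  refine (abs_pow_sub_pow_le _ _ _).trans ?_
  have h1 : |a⁻¹ - b⁻¹| ≤ M * M * |a - b| := by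
    have : a⁻¹ - b⁻¹ = a⁻¹ * b⁻¹ * (b - a) := by field_simp
    rw [this, abs_mul, abs_mul, abs_of_pos (inv_pos.2 ha), abs_of_pos (inv_pos.2 hb),
      abs_sub_comm b a]
    gcongr
  have h2 : max |a⁻¹| |b⁻¹| ≤ M := by
    rw [abs_of_pos (inv_pos.2 ha), abs_of_pos (inv_pos.2 hb)]; exact max_le haM hbM
  calc _ ≤ (M * M * |a - b|) * (n+1 : ℕ) * M ^ (n + 1 - 1) := by gcongr
    _ = _ := by simp only [Nat.add_sub_cancel]; ring

lemma hessN_diff (d : ℕ) (hd : 2 ≤ d) : ∃ C > (0:ℝ), ∀ z h w : EuclideanSpace ℝ (Fin d),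
    z ≠ 0 → 3 * ‖h‖ ≤ ‖z‖ →
    ‖hessN d (z + h) w - hessN d z w‖ ≤ C * ‖h‖ * ‖w‖ * ‖z‖ ^ (-((d : ℝ) + 1)) := by
  have hs := sphereVol_pos d hd
  refine ⟨(sphereVol d)⁻¹ * (d * (3/2)^(d+1) + d * ((d+2) * (3/2)^(d+3) * 4 + 3)), by positivity,
    ?_⟩
  intro z h w hz hh
  have hz' : 0 < ‖z‖ := norm_pos_iff.2 hz
  have hl : 2/3 * ‖z‖ ≤ ‖z + h‖ := by
    have := norm_sub_le (z + h) h
    rw [add_sub_cancel_right] at this; linarith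
  have hu : ‖z + h‖ ≤ 2 * ‖z‖ := by
    have := norm_add_le z h
    have := norm_nonneg h; linarith
  have hp : 0 < ‖z + h‖ := by linarith
  have hd1 : |‖z+h‖ - ‖z‖| ≤ ‖h‖ := by
    have := abs_norm_sub_norm_le (z+h) z
    simpa using this
  set M := 3/2 * ‖z‖⁻¹ with hM
  have hM1 : ‖z‖⁻¹ ≤ M := by have := inv_pos.2 hz'; linarith
  have hM2 : ‖z+h‖⁻¹ ≤ M := by
    have := inv_anti₀ (by positivity) hl
    rw [mul_inv] at this; rw [hM]; linarith
  have hM0 : 0 < M := by positivity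
  have e1 := inv_pow_sub_le d hp hz' hM2 hM1
  have e2 := inv_pow_sub_le (d+2) hp hz' hM2 hM1
  have key : hessN d (z + h) w - hessN d z w = (sphereVol d)⁻¹ •
      (((‖z+h‖ ^ d)⁻¹ - (‖z‖ ^ d)⁻¹) • w - (d:ℝ) • (
        (((‖z+h‖ ^ (d+2))⁻¹ - (‖z‖ ^ (d+2))⁻¹) * ⟪z+h, w⟫) • (z+h)
         + (‖z‖ ^ (d+2))⁻¹ • (⟪h, w⟫ • (z+h) + ⟪z, w⟫ • h))) := by
    unfold hessN
    simp only [inner_add_left]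
    module
  rw [key, norm_smul, norm_inv, Real.norm_of_nonneg hs.le]
  have i1 : ‖⟪z+h, w⟫‖ ≤ 2 * ‖z‖ * ‖w‖ := (norm_inner_le_norm _ _).trans (by gcongr)
  have i2 : ‖⟪h, w⟫‖ ≤ ‖h‖ * ‖w‖ := norm_inner_le_norm _ _
  have i3 : ‖⟪z, w⟫‖ ≤ ‖z‖ * ‖w‖ := norm_inner_le_norm _ _
  have n1 : ‖((‖z+h‖ ^ d)⁻¹ - (‖z‖ ^ d)⁻¹) • w‖ ≤ d * M^(d+1) * ‖h‖ * ‖w‖ := by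
    rw [norm_smul, Real.norm_eq_abs]
    gcongr
    exact e1.trans (by gcongr)
  have n2 : ‖(((‖z+h‖ ^ (d+2))⁻¹ - (‖z‖ ^ (d+2))⁻¹) * ⟪z+h, w⟫) • (z+h)‖ ≤
      ((d+2 : ℕ) * M^(d+2+1) * ‖h‖) * (2 * ‖z‖ * ‖w‖) * (2 * ‖z‖) := by
    rw [norm_smul, norm_mul, Real.norm_eq_abs]
    gcongr
    exact e2.trans (by gcongr)
  have n3 : ‖(‖z‖ ^ (d+2))⁻¹ • (⟪h, w⟫ • (z+h) + ⟪z, w⟫ • h)‖ ≤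
      (‖z‖ ^ (d+2))⁻¹ * (‖h‖ * ‖w‖ * (2 * ‖z‖) + ‖z‖ * ‖w‖ * ‖h‖) := by
    rw [norm_smul, norm_inv, norm_pow, norm_norm]
    gcongr
    refine (norm_add_le _ _).trans ?_
    rw [norm_smul, norm_smul]
    gcongr
  have hr : ‖z‖ ^ (-((d : ℝ) + 1)) = (‖z‖ ^ (d+1))⁻¹ := by
    rw [Real.rpow_neg hz'.le]; congr 1; exact_mod_cast Real.rpow_natCast ‖z‖ (d+1)
  rw [hr]
  calc _ ≤ (sphereVol d)⁻¹ * (d * M^(d+1) * ‖h‖ * ‖w‖ + d * (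
      ((d+2 : ℕ) * M^(d+2+1) * ‖h‖) * (2 * ‖z‖ * ‖w‖) * (2 * ‖z‖) +
      (‖z‖ ^ (d+2))⁻¹ * (‖h‖ * ‖w‖ * (2 * ‖z‖) + ‖z‖ * ‖w‖ * ‖h‖))) := by
        gcongr
        refine (norm_sub_le _ _).trans ?_
        gcongr
        rw [norm_smul]
        have h2 : ‖(d:ℝ)‖ = d := by simp
        rw [h2]
        gcongr
        exact (norm_add_le _ _).trans (by gcongr)
    _ = _ := by
        rw [hM]
        push_cast
        simp only [mul_pow, inv_pow, pow_succ]
        field_simp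
        ring

lemma hasDerivAt_gradN (d : ℕ) (hd : 2 ≤ d) (z h : EuclideanSpace ℝ (Fin d)) (τ : ℝ)
    (hz : z + τ • h ≠ 0) :
    HasDerivAt (fun s : ℝ => gradN d (z + s • h)) (hessN d (z + τ • h) h) τ := by
  have hs := sphereVol_pos d hd
  have hz' : 0 < ‖z + τ • h‖ := norm_pos_iff.2 hz
  have h1 : HasDerivAt (fun s : ℝ => z + s • h) h τ := by
    simpa using ((hasDerivAt_id τ).smul_const h).const_add z
  have h2 : HasDerivAt (fun s : ℝ => ‖z + s • h‖ ^ 2) (2 * ⟪z + τ • h, h⟫) τ := h1.norm_sq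
  have h3 : HasDerivAt (fun s : ℝ => ‖z + s • h‖) (⟪z + τ • h, h⟫ / ‖z + τ • h‖) τ := by
    have := h2.sqrt (by positivity)
    simp only [Real.sqrt_sq (norm_nonneg _)] at this
    convert this using 1
    field_simp
  have h4 := ((h3.pow d).const_mul (sphereVol d)).inv (by simp only [Pi.pow_apply]; positivity)
  have h5 := h4.smul h1
  have h6 : HasDerivAt (fun s : ℝ => gradN d (z + s • h)) _ τ := h5
  refine h6.congr_deriv ?_
  unfold hessN
  have : d - 1 + 1 = d := by omega
  have e : ‖z + τ • h‖ ^ d = ‖z + τ • h‖ ^ (d-1) * ‖z + τ • h‖ := by rw [← pow_succ, this]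
  simp only [Pi.inv_apply, Pi.pow_apply]
  rw [smul_sub, smul_smul, smul_smul, sub_eq_add_neg, ← neg_smul]
  congr 2
  · rw [mul_inv]
  · rw [pow_add, e]
    field_simp

lemma gradN_taylor (d : ℕ) (hd : 2 ≤ d) : ∃ C > (0:ℝ), ∀ z h : EuclideanSpace ℝ (Fin d),
    z ≠ 0 → 3 * ‖h‖ ≤ ‖z‖ →
    ‖gradN d (z + h) - gradN d z - hessN d z h‖ ≤ C * ‖h‖ * ‖h‖ * ‖z‖ ^ (-((d : ℝ) + 1)) := by
  obtain ⟨C, hC, hB⟩ := hessN_diff d hd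
  refine ⟨C, hC, ?_⟩
  intro z h hz hh
  have hz' : 0 < ‖z‖ := norm_pos_iff.2 hz
  have hτ : ∀ τ ∈ Icc (0:ℝ) 1, ‖τ • h‖ ≤ ‖h‖ := by
    intro τ hτ
    rw [norm_smul, Real.norm_of_nonneg hτ.1]
    exact mul_le_of_le_one_left (norm_nonneg _) hτ.2
  have := norm_image_sub_le_of_norm_deriv_le_segment_01'
    (f := fun τ : ℝ => gradN d (z + τ • h) - τ • hessN d z h)
    (f' := fun τ : ℝ => hessN d (z + τ • h) h - hessN d z h)
    (C := C * ‖h‖ * ‖h‖ * ‖z‖ ^ (-((d : ℝ) + 1))) ?_ ?_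
  · simp only [one_smul, zero_smul, add_zero, sub_zero] at this
    have e : gradN d (z + h) - gradN d z - hessN d z h
        = gradN d (z + h) - hessN d z h - gradN d z := by abel
    rw [e]; exact this
  · intro τ ht
    apply HasDerivAt.hasDerivWithinAt
    have hne : z + τ • h ≠ 0 := by
      intro h0
      have := norm_sub_le (z + τ • h) (τ • h)
      rw [add_sub_cancel_right, h0, norm_zero] at this
      have := hτ τ ht
      linarith
    have := (hasDerivAt_gradN d hd z h τ hne).sub ((hasDerivAt_id τ).smul_const (hessN d z h))
    rw [one_smul] at this
    exact this
  · intro τ ht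
    have ht' := hτ τ ⟨ht.1, ht.2.le⟩
    refine (hB z (τ • h) h hz (by linarith)).trans ?_
    gcongr

end Kernel

section Radial

lemma radial_aux (d : ℕ) (hd : 2 ≤ d) (a : ℝ) (S : Set ℝ) (hS : MeasurableSet S)
    (hI : IntegrableOn (fun r : ℝ => r ^ ((d:ℝ) - 1 - a)) (Ioi 0 ∩ S)) (x : EuclideanSpace ℝ (Fin d)) :
    IntegrableOn (fun y => ‖x - y‖ ^ (-a)) {y | ‖x - y‖ ∈ S} ∧
    ∫ y in {y | ‖x - y‖ ∈ S}, ‖x - y‖ ^ (-a)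
      = sphereVol d * ∫ r in Ioi 0 ∩ S, r ^ ((d:ℝ) - 1 - a) := by
  have : Nonempty (Fin d) := ⟨⟨0, by omega⟩⟩
  have hmS : MeasurableSet {y : EuclideanSpace ℝ (Fin d) | ‖x - y‖ ∈ S} := by
    have : Measurable (fun y : EuclideanSpace ℝ (Fin d) => ‖x - y‖) := by fun_prop
    exact this hS
  have hfr : Module.finrank ℝ (EuclideanSpace ℝ (Fin d)) = d := by simp
  set f : ℝ → ℝ := S.indicator (fun r => r ^ (-a)) with hf
  have e1 : ∀ r ∈ Ioi (0:ℝ), r ^ (d - 1) • f r = S.indicator (fun r => r ^ ((d:ℝ) - 1 - a)) r := by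
    intro r hr
    by_cases hrS : r ∈ S
    · simp only [hf, indicator_of_mem hrS, smul_eq_mul]
      rw [sub_eq_add_neg _ a, Real.rpow_add hr, ← Real.rpow_natCast r (d-1)]
      congr 2
      rw [Nat.cast_sub (by omega)]; simp
    · simp [hf, indicator_of_notMem hrS]
  have e2 : ({y | ‖x - y‖ ∈ S} : Set (EuclideanSpace ℝ (Fin d))).indicator
      (fun y => ‖x - y‖ ^ (-a)) = fun y => f ‖x - y‖ := by
    funext y
    by_cases hy : ‖x - y‖ ∈ S
    · rw [indicator_of_mem (show y ∈ {y | ‖x - y‖ ∈ S} from hy), hf, indicator_of_mem hy]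
    · rw [indicator_of_notMem (show y ∉ {y | ‖x - y‖ ∈ S} from hy), hf, indicator_of_notMem hy]
  have i1 : Integrable (fun y : EuclideanSpace ℝ (Fin d) => f ‖y‖) volume := by
    rw [integrable_fun_norm_addHaar, hfr]
    rw [integrableOn_congr_fun e1 measurableSet_Ioi, integrableOn_indicator_iff hS, inter_comm]
    exact hI
  constructor
  · rw [← integrable_indicator_iff hmS, e2]
    exact i1.comp_sub_left x
  · rw [← integral_indicator hmS, e2,
      integral_sub_left_eq_self (fun y : EuclideanSpace ℝ (Fin d) => f ‖y‖) volume x,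
      integral_fun_norm_addHaar, hfr, setIntegral_congr_fun measurableSet_Ioi e1,
      setIntegral_indicator hS]
    simp [sphereVol, Measure.real, mul_assoc]

lemma radial_near (d : ℕ) (hd : 2 ≤ d) (a : ℝ) (ha : a < d) : ∃ C > (0:ℝ), ∀ ρ > 0,
    ∀ x : EuclideanSpace ℝ (Fin d), IntegrableOn (fun y => ‖x - y‖ ^ (-a)) (ball x ρ) ∧
    ∫ y in ball x ρ, ‖x - y‖ ^ (-a) ≤ C * ρ ^ ((d:ℝ) - a) := by
  have hs := sphereVol_pos d hd
  refine ⟨sphereVol d * ((d:ℝ) - a)⁻¹, mul_pos hs (inv_pos.2 (by linarith)), ?_⟩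
  intro ρ hρ x
  have hset : {y : EuclideanSpace ℝ (Fin d) | ‖x - y‖ ∈ Iio ρ} = ball x ρ := by
    ext y; simp [dist_eq_norm, norm_sub_rev]
  have hset2 : Ioi 0 ∩ Iio ρ = Ioo 0 ρ := Ioi_inter_Iio
  have hi : IntervalIntegrable (fun r : ℝ => r ^ ((d:ℝ) - 1 - a)) volume 0 ρ :=
    intervalIntegral.intervalIntegrable_rpow' (by linarith)
  have := radial_aux d hd a (Iio ρ) measurableSet_Iio (by
    rw [hset2]
    rw [intervalIntegrable_iff_integrableOn_Ioc_of_le hρ.le] at hi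
    exact hi.mono_set Ioo_subset_Ioc_self) x
  rw [hset, hset2] at this
  refine ⟨this.1, ?_⟩
  rw [this.2, ← integral_Ioc_eq_integral_Ioo, ← intervalIntegral.integral_of_le hρ.le,
    integral_rpow (Or.inl (by linarith))]
  have e : (d:ℝ) - 1 - a + 1 = d - a := by ring
  rw [e, Real.zero_rpow (by linarith : (d:ℝ) - a ≠ 0)]
  apply le_of_eq
  ring

lemma radial_far (d : ℕ) (hd : 2 ≤ d) (a : ℝ) (ha : d < a) : ∃ C > (0:ℝ), ∀ ρ > 0,
    ∀ x : EuclideanSpace ℝ (Fin d), IntegrableOn (fun y => ‖x - y‖ ^ (-a)) (ball x ρ)ᶜ ∧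
    ∫ y in (ball x ρ)ᶜ, ‖x - y‖ ^ (-a) ≤ C * ρ ^ ((d:ℝ) - a) := by
  have hs := sphereVol_pos d hd
  refine ⟨sphereVol d * (a - (d:ℝ))⁻¹, mul_pos hs (inv_pos.2 (by linarith)), ?_⟩
  intro ρ hρ x
  have hset : {y : EuclideanSpace ℝ (Fin d) | ‖x - y‖ ∈ Ici ρ} = (ball x ρ)ᶜ := by
    ext y; simp [dist_eq_norm, norm_sub_rev]
  have hset2 : Ioi 0 ∩ Ici ρ = Ici ρ := by
    apply inter_eq_right.2
    intro r hr; exact lt_of_lt_of_le hρ hr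
  have := radial_aux d hd a (Ici ρ) measurableSet_Ici (by
    rw [hset2, integrableOn_Ici_iff_integrableOn_Ioi]
    exact integrableOn_Ioi_rpow_of_lt (by linarith) hρ) x
  rw [hset, hset2] at this
  refine ⟨this.1, ?_⟩
  rw [this.2, integral_Ici_eq_integral_Ioi, integral_Ioi_rpow_of_lt (by linarith) hρ]
  have e : (d:ℝ) - 1 - a + 1 = -(a - d) := by ring
  rw [e, neg_div_neg_eq, neg_sub]
  apply le_of_eq
  ring

lemma norm_integral_set_le {d : ℕ} {A B : Set (EuclideanSpace ℝ (Fin d))}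
    (hA : MeasurableSet A) (hAB : A ⊆ B)
    {h : EuclideanSpace ℝ (Fin d) → EuclideanSpace ℝ (Fin d)}
    {k : EuclideanSpace ℝ (Fin d) → ℝ} (hk0 : ∀ y, 0 ≤ k y) (hk : IntegrableOn k B) {c I : ℝ}
    (hc : 0 ≤ c) (hb : ∀ y ∈ A, ‖h y‖ ≤ c * k y) (hI : ∫ y in B, k y ≤ I) :
    ‖∫ y in A, h y‖ ≤ c * I := by
  calc ‖∫ y in A, h y‖ ≤ ∫ y in A, c * k y := by
        apply norm_integral_le_of_norm_le ((hk.mono_set hAB).const_mul c)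
        exact (ae_restrict_iff' hA).2 (Filter.Eventually.of_forall hb)
    _ = c * ∫ y in A, k y := integral_const_mul _ _
    _ ≤ c * ∫ y in B, k y := by
        apply mul_le_mul_of_nonneg_left _ hc
        exact setIntegral_mono_set hk (Filter.Eventually.of_forall hk0) hAB.eventuallyLE
    _ ≤ c * I := by gcongr

lemma norm_integral_near (d : ℕ) (hd : 2 ≤ d) (a : ℝ) (ha : a < d) : ∃ C > (0:ℝ), ∀ ρ > 0,
    ∀ x : EuclideanSpace ℝ (Fin d), ∀ A : Set (EuclideanSpace ℝ (Fin d)), MeasurableSet A →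
    A ⊆ ball x ρ → ∀ h : EuclideanSpace ℝ (Fin d) → EuclideanSpace ℝ (Fin d), ∀ c, 0 ≤ c →
    (∀ y ∈ A, ‖h y‖ ≤ c * ‖x - y‖ ^ (-a)) →
    ‖∫ y in A, h y‖ ≤ c * (C * ρ ^ ((d:ℝ) - a)) := by
  obtain ⟨C, hC, H⟩ := radial_near d hd a ha
  refine ⟨C, hC, ?_⟩
  intro ρ hρ x A hA hAB h c hc hb
  exact norm_integral_set_le hA hAB (fun y => by positivity) (H ρ hρ x).1 hc hb
    (H ρ hρ x).2

lemma norm_integral_far (d : ℕ) (hd : 2 ≤ d) (a : ℝ) (ha : d < a) : ∃ C > (0:ℝ), ∀ ρ > 0,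
    ∀ x : EuclideanSpace ℝ (Fin d), ∀ A : Set (EuclideanSpace ℝ (Fin d)), MeasurableSet A →
    A ⊆ (ball x ρ)ᶜ → ∀ h : EuclideanSpace ℝ (Fin d) → EuclideanSpace ℝ (Fin d), ∀ c, 0 ≤ c →
    (∀ y ∈ A, ‖h y‖ ≤ c * ‖x - y‖ ^ (-a)) →
    ‖∫ y in A, h y‖ ≤ c * (C * ρ ^ ((d:ℝ) - a)) := by
  obtain ⟨C, hC, H⟩ := radial_far d hd a ha
  refine ⟨C, hC, ?_⟩
  intro ρ hρ x A hA hAB h c hc hb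
  exact norm_integral_set_le hA hAB (fun y => by positivity)
    (H ρ hρ x).1 hc hb (H ρ hρ x).2

lemma integrableOn_of_near (d : ℕ) (hd : 2 ≤ d) (a : ℝ) (ha : a < d)
    (x : EuclideanSpace ℝ (Fin d)) (A : Set (EuclideanSpace ℝ (Fin d))) (hA : MeasurableSet A)
    (hAb : Bornology.IsBounded A) (h : EuclideanSpace ℝ (Fin d) → EuclideanSpace ℝ (Fin d))
    (hm : Measurable h) (c : ℝ) (hb : ∀ y ∈ A, ‖h y‖ ≤ c * ‖x - y‖ ^ (-a)) :
    IntegrableOn h A := by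
  obtain ⟨C, hC, H⟩ := radial_near d hd a ha
  obtain ⟨R, hR, hAR⟩ := hAb.subset_ball_lt 0 x
  exact (((H R hR x).1.mono_set hAR).const_mul c).mono' hm.aestronglyMeasurable
    ((ae_restrict_iff' hA).2 (Filter.Eventually.of_forall hb))

end Radial

section Spatial

lemma integrableOn_hessN_const (d : ℕ) (hd : 2 ≤ d) (D : Set (EuclideanSpace ℝ (Fin d)))
    (hD : MeasurableSet D) (hDb : Bornology.IsBounded D) (x w : EuclideanSpace ℝ (Fin d))
    (ρ : ℝ) (hρ : 0 < ρ) : IntegrableOn (fun y => hessN d (x - y) w) (D \ ball x ρ) := by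
  have hs := sphereVol_pos d hd
  refine integrableOn_of_near d hd ((d:ℝ) - 1) (by linarith) x _ (hD.diff measurableSet_ball)
    (hDb.subset sdiff_subset) _ ?_ ((sphereVol d)⁻¹ * (1 + d) * ‖w‖ * ρ⁻¹) ?_
  · exact (measurable_hessN d).comp (f := fun y => (x - y, w)) (by fun_prop)
  · intro y hy
    have hy1 : ρ ≤ ‖x - y‖ := by
      have := hy.2
      rw [mem_ball, not_lt, dist_eq_norm, norm_sub_rev] at this; exact this
    have hp : 0 < ‖x - y‖ := by linarith
    refine (norm_hessN_le d hd _ _).trans ?_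
    rw [mul_assoc _ ρ⁻¹]
    apply mul_le_mul_of_nonneg_left _ (by positivity)
    have : -((d:ℝ) - 1) = -(d:ℝ) + 1 := by ring
    rw [this, Real.rpow_add hp, Real.rpow_one]
    have h1 : 1 ≤ ρ⁻¹ * ‖x - y‖ := by
      rw [inv_mul_eq_div, le_div_iff₀ hρ]; linarith
    have h2 : 0 ≤ ‖x - y‖ ^ (-(d:ℝ)) := by positivity
    nlinarith

lemma truncated_bound (d : ℕ) (hd : 2 ≤ d) : ∃ C > (0:ℝ),
    ∀ D : Set (EuclideanSpace ℝ (Fin d)), MeasurableSet D → Bornology.IsBounded D →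
    ∀ L : ℝ, 0 ≤ L →
    (∀ x y : EuclideanSpace ℝ (Fin d), ‖(-(∫ z in D, gradN d (x - z)))
      - (-(∫ z in D, gradN d (y - z)))‖ ≤ L * ‖x - y‖) →
    ∀ (x w : EuclideanSpace ℝ (Fin d)) (r : ℝ), 0 < r →
    ‖∫ y in D \ ball x (3 * r), hessN d (x - y) w‖ ≤ C * (1 + L) * ‖w‖ := by
  have hs := sphereVol_pos d hd
  obtain ⟨C1, hC1, N1⟩ := norm_integral_near d hd ((d:ℝ) - 1) (by linarith)
  obtain ⟨C2, hC2, N2⟩ := norm_integral_far d hd ((d:ℝ) + 1) (by linarith)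
  obtain ⟨C3, hC3, TT⟩ := gradN_taylor d hd
  set ω := (sphereVol d)⁻¹ with hω
  have hω0 : 0 < ω := inv_pos.2 hs
  refine ⟨1 + ω * C1 * 4 + ω * C1 * 3 + C3 * C2, by positivity, ?_⟩
  intro D hD hDb L hL hLip x w r hr
  rcases eq_or_ne w 0 with rfl | hw
  · have : ∀ z, hessN d z 0 = 0 := by intro z; simp [hessN]
    simp [this]
  have hw' : 0 < ‖w‖ := norm_pos_iff.2 hw
  set h : EuclideanSpace ℝ (Fin d) := (r / ‖w‖) • w with hh
  have hhn : ‖h‖ = r := by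
    rw [hh, norm_smul, Real.norm_of_nonneg (by positivity)]; field_simp
  have hmn : MeasurableSet (D ∩ ball x (3*r)) := hD.inter measurableSet_ball
  have hmf : MeasurableSet (D \ ball x (3*r)) := hD.diff measurableSet_ball
  have hfar : ∀ y ∈ D \ ball x (3*r), 3 * r ≤ ‖x - y‖ := by
    intro y hy
    have := hy.2
    rwa [mem_ball, not_lt, dist_eq_norm, norm_sub_rev] at this
  -- integrability
  have hI : ∀ u : EuclideanSpace ℝ (Fin d), IntegrableOn (fun y => gradN d (u - y)) D := by
    intro u
    refine integrableOn_of_near d hd ((d:ℝ) - 1) (by linarith) u D hD hDb _ ?_ ω ?_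
    · exact (measurable_gradN d).comp (by fun_prop)
    · intro y _
      exact norm_gradN_le d hd _
  have hIh := integrableOn_hessN_const d hd D hD hDb x h (3*r) (by positivity)
  -- splitting
  have split : ∀ u : EuclideanSpace ℝ (Fin d), ∫ y in D, gradN d (u - y) =
      (∫ y in D ∩ ball x (3*r), gradN d (u - y)) + ∫ y in D \ ball x (3*r), gradN d (u - y) := by
    intro u
    exact (integral_inter_add_sdiff measurableSet_ball (hI u)).symm
  have b1 : ‖∫ y in D ∩ ball x (3*r), gradN d (x + h - y)‖ ≤ ω * (C1 * (4*r)) := by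
    have := N1 (4*r) (by positivity) (x + h) (D ∩ ball x (3*r)) hmn ?_
      (fun y => gradN d (x + h - y)) ω hω0.le (fun y _ => norm_gradN_le d hd _)
    · simpa using this
    · intro y hy
      rw [mem_ball, dist_eq_norm]
      have h1 := hy.2
      rw [mem_ball, dist_eq_norm] at h1
      have e : y - (x + h) = (y - x) - h := by abel
      rw [e]
      have := norm_sub_le (y - x) h
      linarith
  have b2 : ‖∫ y in D ∩ ball x (3*r), gradN d (x - y)‖ ≤ ω * (C1 * (3*r)) := by
    have := N1 (3*r) (by positivity) x (D ∩ ball x (3*r)) hmn inter_subset_right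
      (fun y => gradN d (x - y)) ω hω0.le (fun y _ => norm_gradN_le d hd _)
    simpa using this
  have b3 : ‖∫ y in D \ ball x (3*r), (gradN d (x + h - y) - gradN d (x - y)
      - hessN d (x - y) h)‖ ≤ (C3 * r * r) * (C2 * (3*r) ^ (-1:ℝ)) := by
    have := N2 (3*r) (by positivity) x (D \ ball x (3*r)) hmf (fun y hy => hy.2)
      (fun y => gradN d (x + h - y) - gradN d (x - y) - hessN d (x - y) h) (C3 * r * r)
      (by positivity) ?_
    · simpa using this
    · intro y hy
      have h1 := hfar y hy
      have h2 : x - y ≠ 0 := by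
        rw [← norm_pos_iff]; linarith
      have := TT (x - y) h h2 (by rw [hhn]; exact h1)
      rw [hhn] at this
      have e : x + h - y = x - y + h := by abel
      rw [e]; exact this
  have hsub : ∫ y in D \ ball x (3*r), (gradN d (x + h - y) - gradN d (x - y)
      - hessN d (x - y) h) = (∫ y in D \ ball x (3*r), gradN d (x + h - y))
      - (∫ y in D \ ball x (3*r), gradN d (x - y)) - ∫ y in D \ ball x (3*r), hessN d (x - y) h := by
    have ha := (hI (x+h)).mono_set (sdiff_subset (t := ball x (3*r)))
    have hb := (hI x).mono_set (sdiff_subset (t := ball x (3*r)))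
    have hab : Integrable (fun y => gradN d (x + h - y) - gradN d (x - y))
        (volume.restrict (D \ ball x (3*r))) := ha.sub hb
    rw [integral_sub hab hIh, integral_sub ha hb]
  have hL1 := hLip (x + h) x
  rw [add_sub_cancel_left, hhn, split (x+h), split x] at hL1
  set a1 := ∫ y in D ∩ ball x (3*r), gradN d (x + h - y)
  set a2 := ∫ y in D ∩ ball x (3*r), gradN d (x - y)
  set a3 := ∫ y in D \ ball x (3*r), gradN d (x + h - y)
  set a4 := ∫ y in D \ ball x (3*r), gradN d (x - y)
  set a5 := ∫ y in D \ ball x (3*r), hessN d (x - y) h with ha5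
  rw [hsub] at b3
  have e5 : a5 = -(-(a1 + a3) - -(a2 + a4)) - a1 + a2 - (a3 - a4 - a5) := by abel
  have n5 : ‖a5‖ ≤ L * r + ω * (C1 * (4*r)) + ω * (C1 * (3*r))
      + (C3 * r * r) * (C2 * (3*r) ^ (-1:ℝ)) := by
    calc ‖a5‖ = ‖-(-(a1 + a3) - -(a2 + a4)) - a1 + a2 - (a3 - a4 - a5)‖ := by rw [← e5]
      _ ≤ ‖-(-(a1 + a3) - -(a2 + a4)) - a1 + a2‖ + ‖a3 - a4 - a5‖ := norm_sub_le _ _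
      _ ≤ ‖-(-(a1 + a3) - -(a2 + a4)) - a1‖ + ‖a2‖ + ‖a3 - a4 - a5‖ := by
        gcongr; exact norm_add_le _ _
      _ ≤ ‖-(-(a1 + a3) - -(a2 + a4))‖ + ‖a1‖ + ‖a2‖ + ‖a3 - a4 - a5‖ := by
        gcongr; exact norm_sub_le _ _
      _ ≤ _ := by rw [norm_neg]; gcongr
  have hlin : a5 = (r / ‖w‖) • ∫ y in D \ ball x (3*r), hessN d (x - y) w := by
    rw [ha5, ← integral_smul]
    simp only [hh, hessN_smul]
  rw [hlin, norm_smul, Real.norm_of_nonneg (by positivity)] at n5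
  set N := ‖∫ y in D \ ball x (3*r), hessN d (x - y) w‖
  have e6 : (C3 * r * r) * (C2 * (3*r) ^ (-1:ℝ)) = C3 * C2 / 3 * r := by
    rw [Real.rpow_neg_one]; field_simp
  rw [e6, div_mul_eq_mul_div, div_le_iff₀ hw'] at n5
  have n6 : r * N ≤ r * ((1 + ω * C1 * 4 + ω * C1 * 3 + C3 * C2) * (1 + L) * ‖w‖) := by
    refine n5.trans ?_
    have : (L * r + ω * (C1 * (4*r)) + ω * (C1 * (3*r)) + C3 * C2 / 3 * r)
       ≤ r * ((1 + ω * C1 * 4 + ω * C1 * 3 + C3 * C2) * (1 + L)) := by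
      have p1 : 0 < ω * C1 := by positivity
      have p2 : 0 < C3 * C2 := by positivity
      have : L + ω * C1 * 4 + ω * C1 * 3 + C3 * C2 / 3 ≤
        (1 + ω * C1 * 4 + ω * C1 * 3 + C3 * C2) * (1 + L) := by nlinarith [mul_nonneg p1.le hL, mul_nonneg p2.le hL]
      calc _ = r * (L + ω * C1 * 4 + ω * C1 * 3 + C3 * C2 / 3) := by ring
        _ ≤ _ := by gcongr
    calc _ ≤ r * ((1 + ω * C1 * 4 + ω * C1 * 3 + C3 * C2) * (1 + L)) * ‖w‖ := by gcongr
      _ = _ := by ring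
  exact le_of_mul_le_mul_left n6 hr

lemma spatial_bound (d : ℕ) (hd : 2 ≤ d) (γ : ℝ) (hγ : γ ∈ Ioo (0:ℝ) 1) : ∃ C > (0:ℝ),
    ∀ D : Set (EuclideanSpace ℝ (Fin d)), MeasurableSet D → Bornology.IsBounded D →
    ∀ L : ℝ, 0 ≤ L →
    (∀ x y : EuclideanSpace ℝ (Fin d), ‖(-(∫ z in D, gradN d (x - z)))
      - (-(∫ z in D, gradN d (y - z)))‖ ≤ L * ‖x - y‖) →
    ∀ f : EuclideanSpace ℝ (Fin d) → EuclideanSpace ℝ (Fin d), Measurable f → ∀ H : ℝ, 0 ≤ H →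
    (∀ x y, ‖f x - f y‖ ≤ H * ‖x - y‖ ^ γ) →
    ∀ x x' : EuclideanSpace ℝ (Fin d),
    ‖(∫ y in D, hessN d (x - y) (f x - f y)) - ∫ y in D, hessN d (x' - y) (f x' - f y)‖
      ≤ C * (1 + L) * H * ‖x - x'‖ ^ γ := by
  have hs := sphereVol_pos d hd
  obtain ⟨hγ0, hγ1⟩ := hγ
  obtain ⟨C0, hC0, TB⟩ := truncated_bound d hd
  obtain ⟨C1, hC1, N1⟩ := norm_integral_near d hd ((d:ℝ) - γ) (by linarith)
  obtain ⟨C2, hC2, N2⟩ := norm_integral_far d hd ((d:ℝ) + 1 - γ) (by linarith)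
  obtain ⟨C3, hC3, HD⟩ := hessN_diff d hd
  set ω := (sphereVol d)⁻¹ * (1 + d) with hω
  have hω0 : 0 < ω := by positivity
  refine ⟨C0 + ω * C1 * 3 + ω * C1 * 4 + 2 * C3 * C2, by positivity, ?_⟩
  intro D hD hDb L hL hLip f hfm H hH hf x x'
  rcases eq_or_ne x x' with rfl | hxx
  · simp only [sub_self, norm_zero]; positivity
  set r := ‖x - x'‖ with hr
  have hr0 : 0 < r := norm_pos_iff.2 (sub_ne_zero.2 hxx)
  have hmn : MeasurableSet (D ∩ ball x (3*r)) := hD.inter measurableSet_ball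
  have hmf : MeasurableSet (D \ ball x (3*r)) := hD.diff measurableSet_ball
  have hfar : ∀ y ∈ D \ ball x (3*r), 3 * r ≤ ‖x - y‖ := by
    intro y hy
    have := hy.2
    rwa [mem_ball, not_lt, dist_eq_norm, norm_sub_rev] at this
  have hpt : ∀ u y : EuclideanSpace ℝ (Fin d),
      ‖hessN d (u - y) (f u - f y)‖ ≤ ω * H * ‖u - y‖ ^ (-((d:ℝ) - γ)) := by
    intro u y
    refine (norm_hessN_le d hd _ _).trans ?_
    rcases eq_or_ne u y with rfl | huy
    · simp only [sub_self, norm_zero, mul_zero, zero_mul]; positivity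
    have hp : 0 < ‖u - y‖ := norm_pos_iff.2 (sub_ne_zero.2 huy)
    have e : -((d:ℝ) - γ) = γ + -(d:ℝ) := by ring
    rw [e, Real.rpow_add hp]
    calc _ ≤ ω * (H * ‖u - y‖ ^ γ) * ‖u - y‖ ^ (-(d:ℝ)) := by gcongr; exact hf u y
      _ = _ := by ring
  have hI : ∀ u, IntegrableOn (fun y => hessN d (u - y) (f u - f y)) D := by
    intro u
    refine integrableOn_of_near d hd ((d:ℝ) - γ) (by linarith) u D hD hDb _ ?_ (ω * H)
      (fun y _ => hpt u y)
    exact (measurable_hessN d).comp (f := fun y => (u - y, f u - f y)) (by fun_prop)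
  have hIc := integrableOn_hessN_const d hd D hD hDb x (f x - f x') (3*r) (by positivity)
  have split : ∀ u : EuclideanSpace ℝ (Fin d), ∫ y in D, hessN d (u - y) (f u - f y) =
      (∫ y in D ∩ ball x (3*r), hessN d (u - y) (f u - f y))
        + ∫ y in D \ ball x (3*r), hessN d (u - y) (f u - f y) := by
    intro u
    exact (integral_inter_add_sdiff measurableSet_ball (hI u)).symm
  have hpow : ∀ k : ℝ, 1 ≤ k → (k * r) ^ γ ≤ k * r ^ γ := by
    intro k hk
    rw [Real.mul_rpow (by linarith) hr0.le]
    gcongr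
    calc k ^ γ ≤ k ^ (1:ℝ) := Real.rpow_le_rpow_of_exponent_le hk hγ1.le
      _ = k := Real.rpow_one k
  have b1 : ‖∫ y in D ∩ ball x (3*r), hessN d (x - y) (f x - f y)‖
      ≤ ω * H * (C1 * (3 * r ^ γ)) := by
    have := N1 (3*r) (by positivity) x (D ∩ ball x (3*r)) hmn inter_subset_right
      (fun y => hessN d (x - y) (f x - f y)) (ω * H) (by positivity) (fun y _ => hpt x y)
    refine this.trans ?_
    rw [sub_sub_cancel]
    gcongr
    exact hpow 3 (by norm_num)
  have b2 : ‖∫ y in D ∩ ball x (3*r), hessN d (x' - y) (f x' - f y)‖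
      ≤ ω * H * (C1 * (4 * r ^ γ)) := by
    have := N1 (4*r) (by positivity) x' (D ∩ ball x (3*r)) hmn ?_
      (fun y => hessN d (x' - y) (f x' - f y)) (ω * H) (by positivity) (fun y _ => hpt x' y)
    · refine this.trans ?_
      rw [sub_sub_cancel]
      gcongr
      exact hpow 4 (by norm_num)
    · intro y hy
      rw [mem_ball, dist_eq_norm]
      have h1 := hy.2
      rw [mem_ball, dist_eq_norm] at h1
      have e : y - x' = (y - x) + (x - x') := by abel
      rw [e]
      have := norm_add_le (y - x) (x - x')
      linarith
  have b3 : ‖∫ y in D \ ball x (3*r), (hessN d (x - y) (f x' - f y)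
      - hessN d (x' - y) (f x' - f y))‖ ≤ 2 * C3 * H * r * (C2 * (3 * r) ^ (γ - 1)) := by
    have := N2 (3*r) (by positivity) x (D \ ball x (3*r)) hmf (fun y hy => hy.2)
      (fun y => hessN d (x - y) (f x' - f y) - hessN d (x' - y) (f x' - f y)) (2 * C3 * H * r)
      (by positivity) ?_
    · have e : (d:ℝ) - (d + 1 - γ) = γ - 1 := by ring
      rwa [e] at this
    · intro y hy
      have h1 := hfar y hy
      have hp : 0 < ‖x - y‖ := by linarith
      have h2 : x - y ≠ 0 := norm_pos_iff.1 hp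
      have hn : ‖x' - x‖ = r := by rw [hr, norm_sub_rev]
      have := HD (x - y) (x' - x) (f x' - f y) h2 (by rw [hn]; exact h1)
      have e : x - y + (x' - x) = x' - y := by abel
      rw [e, hn] at this
      rw [norm_sub_rev]
      refine this.trans ?_
      have h3 : ‖f x' - f y‖ ≤ H * (2 * ‖x - y‖ ^ γ) := by
        refine (hf x' y).trans ?_
        gcongr
        have h4 : ‖x' - y‖ ≤ 2 * ‖x - y‖ := by
          have := norm_add_le (x - y) (x' - x)
          rw [e, hn] at this; linarith
        calc ‖x' - y‖ ^ γ ≤ (2 * ‖x - y‖) ^ γ := by gcongr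
          _ = 2 ^ γ * ‖x - y‖ ^ γ := Real.mul_rpow (by norm_num) hp.le
          _ ≤ 2 ^ (1:ℝ) * ‖x - y‖ ^ γ := by
            gcongr
            norm_num
          _ = _ := by rw [Real.rpow_one]
      have e2 : -((d:ℝ) + 1 - γ) = γ + -((d:ℝ) + 1) := by ring
      rw [e2, Real.rpow_add hp]
      calc _ ≤ C3 * r * (H * (2 * ‖x - y‖ ^ γ)) * ‖x - y‖ ^ (-((d:ℝ) + 1)) := by gcongr
        _ = _ := by ring
  have b3' : 2 * C3 * H * r * (C2 * (3 * r) ^ (γ - 1)) ≤ 2 * C3 * H * (C2 * r ^ γ) := by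
    have h1 : (3 * r) ^ (γ - 1) ≤ r ^ (γ - 1) :=
      Real.rpow_le_rpow_of_nonpos hr0 (by linarith) (by linarith)
    have h2 : r ^ γ = r ^ (γ - 1) * r := by
      rw [← Real.rpow_add_one hr0.ne', sub_add_cancel]
    rw [h2]
    calc _ ≤ 2 * C3 * H * r * (C2 * r ^ (γ - 1)) := by gcongr
      _ = _ := by ring
  have b4 : ‖∫ y in D \ ball x (3*r), hessN d (x - y) (f x - f x')‖
      ≤ C0 * (1 + L) * (H * r ^ γ) := by
    refine (TB D hD hDb L hL hLip x (f x - f x') r hr0).trans ?_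
    gcongr
    exact hf x x'
  have hsub : (∫ y in D \ ball x (3*r), hessN d (x - y) (f x - f y))
      - (∫ y in D \ ball x (3*r), hessN d (x' - y) (f x' - f y))
      = (∫ y in D \ ball x (3*r), (hessN d (x - y) (f x' - f y)
        - hessN d (x' - y) (f x' - f y)))
        + ∫ y in D \ ball x (3*r), hessN d (x - y) (f x - f x') := by
    have ha := (hI x).mono_set (sdiff_subset (t := ball x (3*r)))
    have hb := (hI x').mono_set (sdiff_subset (t := ball x (3*r)))
    have hab : Integrable (fun y => hessN d (x - y) (f x - f y) - hessN d (x' - y) (f x' - f y))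
        (volume.restrict (D \ ball x (3*r))) := ha.sub hb
    rw [← integral_sub ha hb, ← sub_eq_iff_eq_add, ← integral_sub hab hIc]
    congr 1
    funext y
    simp only [hessN_sub]
    abel
  rw [split x, split x', add_sub_add_comm, hsub]
  have hfin : ω * H * (C1 * (3 * r ^ γ)) + ω * H * (C1 * (4 * r ^ γ)) + (2 * C3 * H * (C2 * r ^ γ)
      + C0 * (1 + L) * (H * r ^ γ))
      ≤ (C0 + ω * C1 * 3 + ω * C1 * 4 + 2 * C3 * C2) * (1 + L) * H * r ^ γ := by
    have p1 : 0 ≤ ω * C1 * L := by positivity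
    have p2 : 0 ≤ C3 * C2 * L := by positivity
    have : ω * C1 * 3 + ω * C1 * 4 + 2 * C3 * C2 + C0 * (1 + L)
       ≤ (C0 + ω * C1 * 3 + ω * C1 * 4 + 2 * C3 * C2) * (1 + L) := by nlinarith
    calc _ = (ω * C1 * 3 + ω * C1 * 4 + 2 * C3 * C2 + C0 * (1 + L)) * H * r ^ γ := by ring
      _ ≤ _ := by gcongr
  refine le_trans ?_ hfin
  refine (norm_add_le _ _).trans ?_
  apply add_le_add
  · exact (norm_sub_le _ _).trans (add_le_add b1 b2)
  · exact (norm_add_le _ _).trans (add_le_add (b3.trans b3') b4)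

end Spatial

section Time

lemma mono_uIcc {T : ℝ} {G : ℝ → ℝ} (hGm : MonotoneOn G (Icc 0 T)) {p t u w : ℝ}
    (hp : p ∈ Icc (0:ℝ) T) (ht : t ∈ Icc (0:ℝ) T) (hu : u ∈ uIcc p t) (hw : w ∈ uIcc p t) :
    |G u - G w| ≤ |G p - G t| := by
  have hsub : uIcc p t ⊆ Icc 0 T := by
    intro z hz
    rcases mem_uIcc.1 hz with h | h
    · exact ⟨hp.1.trans h.1, h.2.trans ht.2⟩
    · exact ⟨ht.1.trans h.1, h.2.trans hp.2⟩
  have key : ∀ z ∈ uIcc p t, G z ∈ uIcc (G p) (G t) := by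
    intro z hz
    have hz' := hsub hz
    rcases mem_uIcc.1 hz with h | h
    · exact mem_uIcc.2 (Or.inl ⟨hGm hp hz' h.1, hGm hz' ht h.2⟩)
    · exact mem_uIcc.2 (Or.inr ⟨hGm ht hz' h.1, hGm hz' hp h.2⟩)
  have h1 := key u hu
  have h2 := key w hw
  have := abs_sub_le_of_uIcc_subset_uIcc (uIcc_subset_uIcc h2 h1)
  rwa [abs_sub_comm (G t)] at this

lemma baire_bound (T : ℝ) (hT : 0 ≤ T) (K G : ℝ → ℝ) (hK0 : ∀ t, 0 ≤ K t)
    (hG : ContinuousOn G (Icc 0 T)) (hGm : MonotoneOn G (Icc 0 T))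
    (hcl : ∀ c, IsClosed {t | t ∈ Icc 0 T ∧ K t ≤ c})
    (hL : ∀ s ∈ Icc (0:ℝ) T, ∀ t ∈ Icc (0:ℝ) T, |G t - G s| ≤ 1/8 →
      BddAbove (K '' uIcc s t) → K t ≤ K s * Real.exp (6 * |G t - G s|)) :
    ∀ t ∈ Icc (0:ℝ) T, K t ≤ K 0 * Real.exp (6 * (G t - G 0)) := by
  have hIcc : ∀ p ∈ Icc (0:ℝ) T, ∀ t ∈ Icc (0:ℝ) T, uIcc p t ⊆ Icc 0 T := by
    intro p hp t ht z hz
    rcases mem_uIcc.1 hz with h | h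
    · exact ⟨hp.1.trans h.1, h.2.trans ht.2⟩
    · exact ⟨ht.1.trans h.1, h.2.trans hp.2⟩
  set U : Set ℝ := {p | ∃ ε > 0, BddAbove (K '' (Icc 0 T ∩ ball p ε))} with hU
  have hUo : IsOpen U := by
    rw [Metric.isOpen_iff]
    rintro p ⟨ε, hε, hb⟩
    refine ⟨ε/2, by positivity, ?_⟩
    intro q hq
    refine ⟨ε/2, by positivity, hb.mono ?_⟩
    apply image_mono
    apply inter_subset_inter_right
    apply ball_subset_ball'
    rw [mem_ball] at hq; linarith
  -- compactness
  have hcomp : ∀ S : Set ℝ, IsCompact S → S ⊆ U → BddAbove (K '' (S ∩ Icc 0 T)) := by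
    intro S hS hSU
    refine hS.induction_on (p := fun A => BddAbove (K '' (A ∩ Icc 0 T))) ?_ ?_ ?_ ?_
    · simp
    · intro s t hst hb
      exact hb.mono (image_mono (inter_subset_inter_left _ hst))
    · intro s t h1 h2
      rw [union_inter_distrib_right, image_union]
      exact h1.union h2
    · intro x hx
      obtain ⟨ε, hε, hb⟩ := hSU hx
      refine ⟨ball x ε, mem_nhdsWithin_of_mem_nhds (ball_mem_nhds x hε), ?_⟩
      rwa [inter_comm]
  have he1 : ∀ a : ℝ, a ≤ 1/8 → Real.exp (6 * a) ≤ Real.exp 1 := by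
    intro a ha
    apply Real.exp_le_exp.2; linarith
  have stepB : ∀ p ∈ Icc (0:ℝ) T, ∀ t ∈ Icc (0:ℝ) T, |G p - G t| ≤ 1/8 →
      (∀ u ∈ uIcc p t, u ≠ p → u ∈ U) → K t ≤ K p * Real.exp 1 := by
    intro p hp t ht hpt hu
    have hbd : BddAbove (K '' uIcc p t) := by
      refine ⟨max (K p) (K t * Real.exp 1), ?_⟩
      rintro _ ⟨u, hu1, rfl⟩
      rcases eq_or_ne u p with rfl | hup
      · exact le_max_left _ _
      · apply le_max_of_le_right
        have hu2 := hIcc p hp t ht hu1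
        have h1 : |G u - G t| ≤ 1/8 :=
          (mono_uIcc hGm hp ht hu1 right_mem_uIcc).trans hpt
        have hsubU : uIcc t u ⊆ U := by
          intro w hw
          apply hu w
          · exact uIcc_subset_uIcc right_mem_uIcc hu1 hw
          · rintro rfl
            apply hup
            rcases mem_uIcc.1 hu1 with h | h <;> rcases mem_uIcc.1 hw with h' | h' <;> linarith
        have h2 := hcomp _ isCompact_uIcc hsubU
        rw [inter_eq_left.2 (hIcc t ht u hu2)] at h2
        refine (hL t ht u hu2 h1 h2).trans ?_
        exact mul_le_mul_of_nonneg_left (he1 _ h1) (hK0 t)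
    rw [abs_sub_comm] at hpt
    refine (hL p hp t ht hpt hbd).trans ?_
    exact mul_le_mul_of_nonneg_left (he1 _ hpt) (hK0 p)
  set B : Set ℝ := Icc 0 T \ U with hB
  have hBc : IsClosed B := isClosed_Icc.sdiff hUo
  have hBe : B = ∅ := by
    by_contra hne
    have hne' : B.Nonempty := nonempty_iff_ne_empty.2 hne
    have : Nonempty B := hne'.to_subtype
    have : CompleteSpace B := hBc.completeSpace_coe
    obtain ⟨n, hn⟩ := nonempty_interior_of_iUnion_of_closed
      (f := fun n : ℕ => {b : B | K b ≤ n}) (by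
        intro n
        have := (hcl n).preimage (continuous_subtype_val (p := fun x => x ∈ B))
        convert this using 1
        ext b
        exact ⟨fun h => ⟨b.2.1, h⟩, fun h => h.2⟩) (by
        rw [eq_univ_iff_forall]
        intro b
        obtain ⟨n, hn⟩ := exists_nat_ge (K b)
        exact mem_iUnion.2 ⟨n, hn⟩)
    obtain ⟨⟨p, hpB⟩, hp⟩ := hn
    rw [mem_interior_iff_mem_nhds, Metric.mem_nhds_iff] at hp
    obtain ⟨ε, hε, hball⟩ := hp
    have hBn : ∀ q ∈ B, dist q p < ε → K q ≤ n := by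
      intro q hq hqp
      exact hball (show (⟨q, hq⟩ : B) ∈ ball _ ε from hqp)
    have hGc := Metric.continuousWithinAt_iff.1 (hG p hpB.1) (1/16) (by norm_num)
    obtain ⟨δ, hδ, hGδ⟩ := hGc
    apply hpB.2
    refine ⟨min ε δ, lt_min hε hδ, ⟨n * Real.exp 1, ?_⟩⟩
    rintro _ ⟨t, ⟨ht, htp⟩, rfl⟩
    rw [mem_ball] at htp
    have hcB : IsCompact (B ∩ uIcc p t) := isCompact_uIcc.inter_left hBc
    obtain ⟨a, ⟨haB, hau⟩, hamin⟩ := hcB.exists_isMinOn ⟨p, hpB, left_mem_uIcc⟩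
      (f := fun z => dist z t) (by fun_prop)
    have hap : dist a p ≤ dist t p := by
      rw [Real.dist_eq, Real.dist_eq]
      exact abs_sub_left_of_mem_uIcc hau
    have hKa : K a ≤ n := hBn a haB (lt_of_le_of_lt hap (lt_of_lt_of_le htp (min_le_left _ _)))
    have hGat : |G a - G t| ≤ 1/8 := by
      refine (mono_uIcc hGm hpB.1 ht hau right_mem_uIcc).trans ?_
      have := hGδ ht (lt_of_lt_of_le htp (min_le_right _ _))
      rw [Real.dist_eq, abs_sub_comm] at this
      linarith
    have := stepB a haB.1 t ht hGat (by
      intro u hu hua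
      by_contra huU
      have hu2 : u ∈ uIcc p t := uIcc_subset_uIcc hau right_mem_uIcc hu
      have h3 : dist a t ≤ dist u t := hamin ⟨⟨hIcc p hpB.1 t ht hu2, huU⟩, hu2⟩
      rw [Real.dist_eq, Real.dist_eq] at h3
      apply hua
      rcases mem_uIcc.1 hu with h | h
      · rw [abs_of_nonpos (by linarith), abs_of_nonpos (by linarith)] at h3; linarith
      · rw [abs_of_nonneg (by linarith), abs_of_nonneg (by linarith)] at h3; linarith)
    refine this.trans ?_
    gcongr
  have hall : Icc 0 T ⊆ U := by
    intro z hz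
    by_contra h
    have : z ∈ B := ⟨hz, h⟩
    rw [hBe] at this; exact this
  have hbd : BddAbove (K '' Icc 0 T) := by
    have := hcomp _ isCompact_Icc hall
    rwa [inter_self] at this
  have chain : ∀ n : ℕ, ∀ s ∈ Icc (0:ℝ) T, ∀ t ∈ Icc (0:ℝ) T, s ≤ t → G t - G s ≤ 2 ^ n * (1/8) →
      K t ≤ K s * Real.exp (6 * (G t - G s)) := by
    intro n
    induction n with
    | zero =>
      intro s hs t ht hst h
      have h0 : 0 ≤ G t - G s := sub_nonneg.2 (hGm hs ht hst)
      have := hL s hs t ht (by rw [abs_of_nonneg h0]; linarith)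
        (hbd.mono (image_mono (hIcc s hs t ht)))
      rwa [abs_of_nonneg h0] at this
    | succ n ih =>
      intro s hs t ht hst h
      have h0 : 0 ≤ G t - G s := sub_nonneg.2 (hGm hs ht hst)
      have hsub : Icc s t ⊆ Icc 0 T := Icc_subset_Icc hs.1 ht.2
      obtain ⟨u, hu, hGu⟩ := intermediate_value_Icc hst (hG.mono hsub)
        (show (G s + G t) / 2 ∈ Icc (G s) (G t) by constructor <;> linarith)
      have hu' := hsub hu
      rw [pow_succ] at h
      have k1 := ih s hs u hu' hu.1 (by rw [hGu]; linarith)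
      have k2 := ih u hu' t ht hu.2 (by rw [hGu]; linarith)
      calc K t ≤ K u * Real.exp (6 * (G t - G u)) := k2
        _ ≤ (K s * Real.exp (6 * (G u - G s))) * Real.exp (6 * (G t - G u)) := by gcongr
        _ = _ := by rw [mul_assoc, ← Real.exp_add]; congr 2; ring
  intro t ht
  obtain ⟨n, hn⟩ := pow_unbounded_of_one_lt ((G t - G 0) * 8) (by norm_num : (1:ℝ) < 2)
  exact chain n 0 ⟨le_rfl, hT⟩ t ht ht.1 (by linarith)

lemma ftc_bound {E : Type*} [NormedAddCommGroup E] [NormedSpace ℝ E] [CompleteSpace E]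
    {F F' : ℝ → E} {w : ℝ → ℝ} {c s t : ℝ} (hc : 0 ≤ c)
    (hF : ∀ σ ∈ uIcc s t, HasDerivAt F (F' σ) σ) (hw0 : ∀ σ, 0 ≤ w σ)
    (hw : IntervalIntegrable w volume s t) (hb : ∀ σ ∈ uIcc s t, ‖F' σ‖ ≤ c * w σ) :
    ‖F t - F s‖ ≤ c * |∫ σ in s..t, w σ| := by
  have hF2 : ∀ σ ∈ uIcc s t, HasDerivAt F (deriv F σ) σ := fun σ hσ => (hF σ hσ).differentiableAt.hasDerivAt
  have hb2 : ∀ᵐ σ ∂(volume.restrict (uIoc s t)), ‖deriv F σ‖ ≤ c * w σ := by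
    refine (ae_restrict_iff' measurableSet_uIoc).2 (Filter.Eventually.of_forall ?_)
    intro σ hσ
    have := uIoc_subset_uIcc hσ
    rw [(hF σ this).deriv]
    exact hb σ this
  have hI : IntervalIntegrable (deriv F) volume s t :=
    (hw.const_mul c).mono_fun (aestronglyMeasurable_deriv F _) (by
      filter_upwards [hb2] with σ hσ
      rw [Real.norm_of_nonneg (mul_nonneg hc (hw0 σ))]
      exact hσ)
  rw [← intervalIntegral.integral_eq_sub_of_hasDerivAt hF2 hI]
  refine (intervalIntegral.norm_integral_le_abs_of_norm_le hb2 (hw.const_mul c)).trans ?_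
  rw [intervalIntegral.integral_const_mul, abs_mul, abs_of_nonneg hc]

end Time

section Assembly

lemma time_bound {E A : Type*} [NormedAddCommGroup E] [NormedSpace ℝ E] [CompleteSpace E]
    (T : ℝ) (hT : 0 ≤ T) (γ : ℝ) (hγ : γ ∈ Ioo (0:ℝ) 1) (C : ℝ) (hC : 1 ≤ C)
    (g K : ℝ → ℝ) (hg0 : ∀ s, 0 ≤ g s) (hgi : IntervalIntegrable g volume 0 T)
    (Y Y' F F' : A → ℝ → E) (hK0 : ∀ t, 0 ≤ K t)
    (hY : ∀ a, ∀ t ∈ Icc (0:ℝ) T, HasDerivAt (Y a) (Y' a t) t)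
    (hF : ∀ a, ∀ t ∈ Icc (0:ℝ) T, HasDerivAt (F a) (F' a t) t)
    (hYb : ∀ a, ∀ t ∈ Icc (0:ℝ) T, ‖Y' a t‖ ≤ g t * ‖Y a t‖)
    (hFb : ∀ a, ∀ t ∈ Icc (0:ℝ) T, ‖F' a t‖ ≤ C * (1 + g t) * K t * ‖Y a t‖ ^ γ)
    (hK1 : ∀ a, ∀ t ∈ Icc (0:ℝ) T, ‖F a t‖ ≤ K t * ‖Y a t‖ ^ γ)
    (hK2 : ∀ t ∈ Icc (0:ℝ) T, ∀ c, 0 ≤ c → (∀ a, ‖F a t‖ ≤ c * ‖Y a t‖ ^ γ) → K t ≤ c) :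
    ∀ t ∈ Icc (0:ℝ) T, K t ≤ K 0 * Real.exp (6 * (C * ∫ s in (0:ℝ)..t, (1 + g s))) := by
  obtain ⟨hγ0, hγ1⟩ := hγ
  have hwi : IntervalIntegrable (fun s => 1 + g s) volume 0 T :=
    intervalIntegrable_const.add hgi
  have hw0 : ∀ s, 0 ≤ 1 + g s := fun s => by have := hg0 s; linarith
  have hsubi : ∀ s ∈ Icc (0:ℝ) T, ∀ t ∈ Icc (0:ℝ) T, uIcc s t ⊆ Icc 0 T := by
    intro p hp t ht z hz
    rcases mem_uIcc.1 hz with h | h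
    · exact ⟨hp.1.trans h.1, h.2.trans ht.2⟩
    · exact ⟨ht.1.trans h.1, h.2.trans hp.2⟩
  have hres : ∀ f : ℝ → ℝ, IntervalIntegrable f volume 0 T → ∀ s ∈ Icc (0:ℝ) T,
      ∀ t ∈ Icc (0:ℝ) T, IntervalIntegrable f volume s t := by
    intro f hf s hs t ht
    apply hf.mono_set
    rw [uIcc_of_le hT]
    exact hsubi s hs t ht
  have h0T : (0:ℝ) ∈ Icc (0:ℝ) T := ⟨le_rfl, hT⟩
  set G : ℝ → ℝ := fun t => C * ∫ s in (0:ℝ)..t, (1 + g s) with hGdef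
  have hGd : ∀ s ∈ Icc (0:ℝ) T, ∀ t ∈ Icc (0:ℝ) T, G t - G s = C * ∫ σ in s..t, (1 + g σ) := by
    intro s hs t ht
    simp only [hGdef]
    rw [← mul_sub, intervalIntegral.integral_interval_sub_left (hres _ hwi _ h0T _ ht)
      (hres _ hwi _ h0T _ hs)]
  have hGc : ContinuousOn G (Icc 0 T) := by
    have := intervalIntegral.continuousOn_primitive_interval' hwi left_mem_uIcc
    rw [uIcc_of_le hT] at this
    exact this.const_mul C
  have hGm : MonotoneOn G (Icc 0 T) := by
    intro s hs t ht hst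
    have := hGd s hs t ht
    have h2 : 0 ≤ ∫ σ in s..t, (1 + g σ) := intervalIntegral.integral_nonneg hst (fun u _ => hw0 u)
    have h3 : 0 ≤ C * ∫ σ in s..t, (1 + g σ) := mul_nonneg (by linarith) h2
    linarith
  have hcl : ∀ c, IsClosed {t | t ∈ Icc 0 T ∧ K t ≤ c} := by
    intro c
    rcases lt_or_ge c 0 with hc | hc
    · have : {t | t ∈ Icc 0 T ∧ K t ≤ c} = ∅ := by
        rw [eq_empty_iff_forall_notMem]
        rintro t ⟨_, h⟩
        have := hK0 t
        linarith
      rw [this]; exact isClosed_empty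
    · have : {t | t ∈ Icc 0 T ∧ K t ≤ c} =
          Icc 0 T ∩ ⋂ a, {t | t ∈ Icc 0 T ∧ ‖F a t‖ ≤ c * ‖Y a t‖ ^ γ} := by
        ext t
        constructor
        · rintro ⟨ht, hk⟩
          refine ⟨ht, mem_iInter.2 fun a => ⟨ht, (hK1 a t ht).trans (by gcongr)⟩⟩
        · rintro ⟨ht, hk⟩
          exact ⟨ht, hK2 t ht c hc fun a => (mem_iInter.1 hk a).2⟩
      rw [this]
      refine isClosed_Icc.inter (isClosed_iInter fun a => ?_)
      have hcF : ContinuousOn (F a) (Icc 0 T) :=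
        fun t ht => (hF a t ht).continuousAt.continuousWithinAt
      have hcY : ContinuousOn (Y a) (Icc 0 T) :=
        fun t ht => (hY a t ht).continuousAt.continuousWithinAt
      exact isClosed_Icc.isClosed_le hcF.norm
        ((hcY.norm.rpow_const (fun x _ => Or.inr hγ0.le)).const_mul c)
  have hL : ∀ s ∈ Icc (0:ℝ) T, ∀ t ∈ Icc (0:ℝ) T, |G t - G s| ≤ 1/8 →
      BddAbove (K '' uIcc s t) → K t ≤ K s * Real.exp (6 * |G t - G s|) := by
    intro s hs t ht hGst hbd
    set δ := |G t - G s| with hδ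
    have hδ0 : 0 ≤ δ := abs_nonneg _
    set M := sSup (K '' uIcc s t) with hM
    have hKM : ∀ τ ∈ uIcc s t, K τ ≤ M := fun τ hτ => le_csSup hbd ⟨τ, hτ, rfl⟩
    have hM0 : 0 ≤ M := (hK0 s).trans (hKM s left_mem_uIcc)
    have hJ := hsubi s hs t ht
    -- total weight on subintervals
    have hwt : ∀ u ∈ uIcc s t, ∀ τ ∈ uIcc s t, C * |∫ σ in u..τ, (1 + g σ)| ≤ δ := by
      intro u hu τ hτ
      have := hGd u (hJ hu) τ (hJ hτ)
      rw [← abs_of_nonneg (by linarith : 0 ≤ C), ← abs_mul, ← this, hδ, abs_sub_comm (G t)]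
      exact mono_uIcc hGm hs ht hτ hu
    have hwt1 : ∀ u ∈ uIcc s t, ∀ τ ∈ uIcc s t, |∫ σ in u..τ, (1 + g σ)| ≤ δ := by
      intro u hu τ hτ
      refine le_trans ?_ (hwt u hu τ hτ)
      exact le_mul_of_one_le_left (abs_nonneg _) hC
    have main : ∀ τ ∈ uIcc s t, K τ ≤ (K s + M * δ) * Real.exp (2 * δ) := by
      intro τ hτ
      apply hK2 τ (hJ hτ) _ (by have := hK0 s; positivity)
      intro a
      obtain ⟨m, hm, hmax⟩ := isCompact_uIcc.exists_isMaxOn (s := uIcc s t) ⟨s, left_mem_uIcc⟩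
        (f := fun σ => ‖Y a σ‖)
        (fun σ hσ => (hY a σ (hJ hσ)).continuousAt.norm.continuousWithinAt)
      set Ds := ‖Y a m‖ with hDs
      have hDs0 : 0 ≤ Ds := norm_nonneg _
      have hmax' : ∀ σ ∈ uIcc s t, ‖Y a σ‖ ≤ Ds := fun σ hσ => hmax hσ
      have hτm : uIcc τ m ⊆ uIcc s t := uIcc_subset_uIcc hτ hm
      have hsτ : uIcc s τ ⊆ uIcc s t := uIcc_subset_uIcc left_mem_uIcc hτ
      have d1 : ‖Y a m - Y a τ‖ ≤ Ds * |∫ σ in τ..m, (1 + g σ)| := by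
        refine ftc_bound hDs0 (F' := Y' a) (fun σ hσ => hY a σ (hJ (hτm hσ))) hw0
          (hres _ hwi _ (hJ hτ) _ (hJ hm)) ?_
        intro σ hσ
        refine (hYb a σ (hJ (hτm hσ))).trans ?_
        have h1 := hmax' σ (hτm hσ)
        have h2 := hg0 σ
        have h3 := norm_nonneg (Y a σ)
        nlinarith
      have d2 : Ds ≤ ‖Y a τ‖ + Ds * δ := by
        have h1 := norm_add_le (Y a τ) (Y a m - Y a τ)
        rw [add_sub_cancel] at h1
        have h2 := mul_le_mul_of_nonneg_left (hwt1 τ hτ m hm) hDs0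
        linarith
      have hexp : 1 ≤ (1 - δ) * Real.exp (2 * δ) := by
        have := Real.add_one_le_exp (2 * δ)
        nlinarith
      have d3 : Ds ≤ ‖Y a τ‖ * Real.exp (2 * δ) := by
        have h1 : Ds * (1 - δ) ≤ ‖Y a τ‖ := by linarith
        calc Ds = Ds * 1 := (mul_one _).symm
          _ ≤ Ds * ((1 - δ) * Real.exp (2 * δ)) := by gcongr
          _ = Ds * (1 - δ) * Real.exp (2 * δ) := by ring
          _ ≤ _ := by gcongr
      have d4 : Ds ^ γ ≤ ‖Y a τ‖ ^ γ * Real.exp (2 * δ) := by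
        calc Ds ^ γ ≤ (‖Y a τ‖ * Real.exp (2 * δ)) ^ γ := by gcongr
          _ = ‖Y a τ‖ ^ γ * (Real.exp (2 * δ)) ^ γ :=
            Real.mul_rpow (norm_nonneg _) (Real.exp_pos _).le
          _ ≤ ‖Y a τ‖ ^ γ * (Real.exp (2 * δ)) ^ (1:ℝ) := by
            gcongr
            · exact Real.one_le_exp (by linarith)
          _ = _ := by rw [Real.rpow_one]
      have f1 : ‖F a τ - F a s‖ ≤ (C * M * Ds ^ γ) * |∫ σ in s..τ, (1 + g σ)| := by
        refine ftc_bound (by positivity) (F' := F' a) (fun σ hσ => hF a σ (hJ (hsτ hσ))) hw0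
          (hres _ hwi _ hs _ (hJ hτ)) ?_
        intro σ hσ
        refine (hFb a σ (hJ (hsτ hσ))).trans ?_
        have h1 := hmax' σ (hsτ hσ)
        have h2 := hKM σ (hsτ hσ)
        have h3 := hw0 σ
        calc C * (1 + g σ) * K σ * ‖Y a σ‖ ^ γ ≤ C * (1 + g σ) * M * Ds ^ γ := by gcongr
          _ = _ := by ring
      have f2 : ‖F a s‖ ≤ K s * Ds ^ γ := by
        refine (hK1 a s hs).trans ?_
        have := hmax' s left_mem_uIcc
        have := hK0 s
        gcongr
      have f3 : ‖F a τ‖ ≤ (K s + M * δ) * Ds ^ γ := by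
        have h1 := norm_add_le (F a s) (F a τ - F a s)
        rw [add_sub_cancel] at h1
        have h2 := hwt s left_mem_uIcc τ hτ
        have h3 : (C * M * Ds ^ γ) * |∫ σ in s..τ, (1 + g σ)| ≤ M * Ds ^ γ * δ := by
          calc _ = M * Ds ^ γ * (C * |∫ σ in s..τ, (1 + g σ)|) := by ring
            _ ≤ _ := by gcongr
        calc ‖F a τ‖ ≤ K s * Ds ^ γ + M * Ds ^ γ * δ := by linarith
          _ = _ := by ring
      have h5 : 0 ≤ K s + M * δ := by have := hK0 s; positivity
      calc ‖F a τ‖ ≤ (K s + M * δ) * Ds ^ γ := f3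
        _ ≤ (K s + M * δ) * (‖Y a τ‖ ^ γ * Real.exp (2 * δ)) := by gcongr
        _ = _ := by ring
    have hMle : M ≤ (K s + M * δ) * Real.exp (2 * δ) := by
      apply csSup_le (Nonempty.image K ⟨s, left_mem_uIcc⟩)
      rintro _ ⟨τ, hτ, rfl⟩
      exact main τ hτ
    have hexp2 : Real.exp (2 * δ) ≤ 2 := by
      calc Real.exp (2 * δ) ≤ Real.exp (1/4) := Real.exp_le_exp.2 (by linarith)
        _ ≤ 2 := by
          have h1 := Real.exp_bound_div_one_sub_of_interval (x := 1/4) (by norm_num) (by norm_num)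
          norm_num at h1 ⊢
          linarith
    have hM2 : M * (1 - 2 * δ) ≤ K s * Real.exp (2 * δ) := by
      have h1 : M * δ * Real.exp (2 * δ) ≤ M * δ * 2 := by gcongr
      nlinarith
    have hexp3 : 1 ≤ (1 - 2 * δ) * Real.exp (4 * δ) := by
      have := Real.add_one_le_exp (4 * δ)
      nlinarith
    calc K t ≤ M := hKM t right_mem_uIcc
      _ = M * 1 := (mul_one _).symm
      _ ≤ M * ((1 - 2 * δ) * Real.exp (4 * δ)) := by gcongr
      _ = M * (1 - 2 * δ) * Real.exp (4 * δ) := by ring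
      _ ≤ K s * Real.exp (2 * δ) * Real.exp (4 * δ) := by gcongr
      _ = _ := by rw [mul_assoc, ← Real.exp_add]; congr 2; ring
  intro t ht
  have := baire_bound T hT K G hK0 hGc hGm hcl hL t ht
  have hG0 : G 0 = 0 := by simp [hGdef]
  rw [hG0, sub_zero] at this
  exact this

end Assembly

/-- A priori Hölder bound for the gradient of the transported defining function
(estimate (7.4)). -/
theorem apriori_holder_bound
    (d : ℕ) (hd : 2 ≤ d) (γ : ℝ) (hγ : γ ∈ Set.Ioo (0:ℝ) 1) :
    ∃ C > (0:ℝ),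
      ∀ (T : ℝ), 0 < T →
      ∀ D₀ : Set (EuclideanSpace ℝ (Fin d)), IsC1Domain d γ D₀ →
      ∀ X : EuclideanSpace ℝ (Fin d) → ℝ → EuclideanSpace ℝ (Fin d),
        (Continuous fun p : EuclideanSpace ℝ (Fin d) × ℝ => X p.1 p.2) →
        (∀ α, X α 0 = α) →
        (∀ t ∈ Set.Icc (0:ℝ) T,
          ∃ h : EuclideanSpace ℝ (Fin d) ≃ₜ EuclideanSpace ℝ (Fin d), ∀ α, h α = X α t) →
        (∀ t ∈ Set.Icc (0:ℝ) T, IsC1Domain d γ ((fun α => X α t) '' D₀)) →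
        (∀ t ∈ Set.Icc (0:ℝ) T,
          frontier ((fun α => X α t) '' D₀) = (fun α => X α t) '' frontier D₀) →
      ∀ v : EuclideanSpace ℝ (Fin d) → ℝ → EuclideanSpace ℝ (Fin d),
        (∀ x t, v x t = -(∫ y in (fun α => X α t) '' D₀, gradN d (x - y))) →
        (∀ α, ∀ t ∈ Set.Icc (0:ℝ) T, HasDerivAt (fun s => X α s) (v (X α t) t) t) →
      ∀ g : ℝ → ℝ, (∀ s, 0 ≤ g s) → IntervalIntegrable g volume 0 T →
        (∀ s ∈ Set.Icc (0:ℝ) T, ∀ x y : EuclideanSpace ℝ (Fin d),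
          ‖v x s - v y s‖ ≤ g s * ‖x - y‖) →
      ∀ Φ : EuclideanSpace ℝ (Fin d) → ℝ → ℝ,
        (Continuous fun p : EuclideanSpace ℝ (Fin d) × ℝ => Φ p.1 p.2) →
        (∀ t ∈ Set.Icc (0:ℝ) T,
          IsDefining d γ ((fun α => X α t) '' D₀) (fun z => Φ z t)) →
        (∀ α : EuclideanSpace ℝ (Fin d), ∀ t ∈ Set.Icc (0:ℝ) T,
          HasDerivAt (fun s => gradient (fun z => Φ z s) (X α s))
            (∫ y in (fun α => X α t) '' D₀,
              hessN d (X α t - y)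
                (gradient (fun z => Φ z t) (X α t) - gradient (fun z => Φ z t) y)) t) →
      ∀ H₀ : ℝ,
        (∀ x y, ‖gradient (fun z => Φ z 0) x - gradient (fun z => Φ z 0) y‖
          ≤ H₀ * ‖x - y‖ ^ γ) →
        ∀ t ∈ Set.Icc (0:ℝ) T, ∀ x y,
          ‖gradient (fun z => Φ z t) x - gradient (fun z => Φ z t) y‖
            ≤ H₀ * Real.exp (C * ∫ s in (0:ℝ)..t, (1 + g s)) * ‖x - y‖ ^ γ := by
  obtain ⟨C0, hC0, SB⟩ := spatial_bound d hd γ hγ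
  refine ⟨6 * (1 + C0), by positivity, ?_⟩
  intro T hT D₀ hD₀ X hXc hX0 hXh hXD hXfr v hv hXv g hg0 hgi hgL Φ hΦc hΦ hΦd H₀ hH₀
  set f : ℝ → EuclideanSpace ℝ (Fin d) → EuclideanSpace ℝ (Fin d) :=
    fun t => gradient (fun z => Φ z t) with hf
  set S : ℝ → Set ℝ := fun t => {c | 0 ≤ c ∧ ∀ x y, ‖f t x - f t y‖ ≤ c * ‖x - y‖ ^ γ} with hS
  have hSne : ∀ t ∈ Icc (0:ℝ) T, (S t).Nonempty := by
    intro t ht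
    obtain ⟨k, hk⟩ := (hΦ t ht).2.1
    refine ⟨max k 0, le_max_right _ _, fun x y => (hk x y).trans ?_⟩
    gcongr
    exact le_max_left _ _
  have hSb : ∀ t, BddBelow (S t) := fun t => ⟨0, fun c hc => hc.1⟩
  set K : ℝ → ℝ := fun t => sInf (S t) with hK
  have hK0 : ∀ t, 0 ≤ K t := fun t => Real.sInf_nonneg fun c hc => hc.1
  have hKH : ∀ t ∈ Icc (0:ℝ) T, ∀ x y, ‖f t x - f t y‖ ≤ K t * ‖x - y‖ ^ γ := by
    intro t ht x y
    have hcl : IsClosed (S t) := by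
      have : S t = Ici 0 ∩ ⋂ x, ⋂ y, {c | ‖f t x - f t y‖ ≤ c * ‖x - y‖ ^ γ} := by
        ext c
        simp only [mem_inter_iff, mem_iInter]
        exact Iff.rfl
      rw [this]
      refine isClosed_Ici.inter (isClosed_iInter fun x => isClosed_iInter fun y => ?_)
      exact isClosed_le continuous_const (by fun_prop)
    exact (hcl.csInf_mem (hSne t ht) (hSb t)).2 x y
  have hfm : ∀ t ∈ Icc (0:ℝ) T, Measurable (f t) := by
    intro t ht
    apply Continuous.measurable
    have h1 := (hΦ t ht).1.continuous_fderiv (by norm_num)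
    simp only [hf]
    exact (LinearIsometryEquiv.continuous _).comp h1
  have hsurj : ∀ t ∈ Icc (0:ℝ) T, ∀ x, ∃ α, X α t = x := by
    intro t ht x
    obtain ⟨h, hh⟩ := hXh t ht
    exact ⟨h.symm x, by rw [← hh]; simp⟩
  have hLip : ∀ t ∈ Icc (0:ℝ) T, ∀ x y : EuclideanSpace ℝ (Fin d),
      ‖(-(∫ z in (fun α => X α t) '' D₀, gradN d (x - z)))
      - (-(∫ z in (fun α => X α t) '' D₀, gradN d (y - z)))‖ ≤ g t * ‖x - y‖ := by
    intro t ht x y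
    rw [← hv, ← hv]
    exact hgL t ht x y
  have hTB := time_bound (A := EuclideanSpace ℝ (Fin d) × EuclideanSpace ℝ (Fin d))
    T hT.le γ hγ (1 + C0) (by linarith) g K hg0 hgi
    (fun a t => X a.1 t - X a.2 t) (fun a t => v (X a.1 t) t - v (X a.2 t) t)
    (fun a t => f t (X a.1 t) - f t (X a.2 t))
    (fun a t => (∫ y in (fun α => X α t) '' D₀, hessN d (X a.1 t - y) (f t (X a.1 t) - f t y))
      - ∫ y in (fun α => X α t) '' D₀, hessN d (X a.2 t - y) (f t (X a.2 t) - f t y))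
    hK0
    (fun a t ht => (hXv a.1 t ht).sub (hXv a.2 t ht))
    (fun a t ht => (hΦd a.1 t ht).sub (hΦd a.2 t ht))
    (fun a t ht => hgL t ht _ _)
    (by
      intro a t ht
      have := SB ((fun α => X α t) '' D₀) (hXD t ht).1.measurableSet (hXD t ht).2.1 (g t) (hg0 t)
        (hLip t ht) (f t) (hfm t ht) (K t) (hK0 t) (hKH t ht) (X a.1 t) (X a.2 t)
      refine this.trans ?_
      have h1 := hg0 t
      have h2 := hK0 t
      have h3 : C0 ≤ 1 + C0 := by linarith
      have h4 : 0 ≤ 1 + g t := by linarith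
      gcongr)
    (fun a t ht => hKH t ht _ _)
    (by
      intro t ht c hc h
      apply csInf_le (hSb t)
      refine ⟨hc, fun x y => ?_⟩
      obtain ⟨α, rfl⟩ := hsurj t ht x
      obtain ⟨β, rfl⟩ := hsurj t ht y
      exact h (α, β))
  have hH₀0 : 0 ≤ H₀ := by
    have : Nonempty (Fin d) := ⟨⟨0, by omega⟩⟩
    obtain ⟨u, hu⟩ := exists_ne (0 : EuclideanSpace ℝ (Fin d))
    have h1 := (norm_nonneg _).trans (hH₀ u 0)
    rw [sub_zero] at h1
    have h2 : 0 < ‖u‖ ^ γ := Real.rpow_pos_of_pos (norm_pos_iff.2 hu) γ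
    exact nonneg_of_mul_nonneg_left h1 h2
  have hKH₀ : K 0 ≤ H₀ := csInf_le (hSb 0) ⟨hH₀0, hH₀⟩
  intro t ht x y
  refine (hKH t ht x y).trans ?_
  have h1 := hTB t ht
  rw [← mul_assoc] at h1
  gcongr
  refine h1.trans ?_
  gcongr
end

section
/- Reproducing identity for the defining function: let d ≥ 2, γ ∈ (0,1), let D ⊂ ℝ^d be a bounded C^{1+γ} domain with defining function Φ (so Φ is C¹ with γ-Hölder gradient, D = {Φ<0}, ∂D = {Φ=0}). Then for every x ∈ ℝ^d, χ_D(x) Φ(x) = ∫_D ∇N(x-y) · ∇Φ(y) dy, where the integral converges absolutely. -/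
open MeasureTheory Metric Set
open scoped RealInnerProductSpace

lemma one_dim_aux (g : ℝ → ℝ) (hg : ContDiff ℝ 1 g) (R : ℝ) (hR : 0 < R)
    (hgR : ∀ r, R ≤ r → 0 ≤ g r) :
    ∫ r in Ioi (0:ℝ), (if g r < 0 then deriv g r else 0) = - min (g 0) 0 := by
  have hder : ∀ r, deriv (fun r => min (g r) 0) r = if g r < 0 then deriv g r else 0 := by
    intro r
    split_ifs with h
    · apply Filter.EventuallyEq.deriv_eq
      filter_upwards [hg.continuous.continuousAt.eventually_lt continuousAt_const h] with s hs
      exact min_eq_left (le_of_lt hs)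
    · apply IsLocalMax.deriv_eq_zero
      refine Filter.Eventually.of_forall fun s => ?_
      simp only
      rw [min_eq_right (not_lt.mp h)]
      exact min_le_right _ _
  have hac : AbsolutelyContinuousOnInterval (fun r => min (g r) 0) 0 R := by
    obtain ⟨K, hK⟩ := hg.locallyLipschitz.locallyLipschitzOn.exists_lipschitzOnWith_of_compact
      (isCompact_uIcc (a := (0:ℝ)) (b := R))
    apply LipschitzOnWith.absolutelyContinuousOnInterval (K := K)
    intro a ha b hb
    refine le_trans ?_ (hK ha hb)
    rw [edist_dist, edist_dist]
    apply ENNReal.ofReal_le_ofReal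
    rw [Real.dist_eq, Real.dist_eq]
    have := abs_min_sub_min_le_max (g a) 0 (g b) 0
    simpa using this
  have h := hac.integral_deriv_eq_sub
  simp only [hder] at h
  rw [intervalIntegral.integral_of_le hR.le, min_eq_right (hgR R le_rfl), zero_sub] at h
  rw [← h]
  apply setIntegral_eq_of_subset_of_forall_sdiff_eq_zero measurableSet_Ioi (fun r hr => hr.1)
  rintro r ⟨hr, hr2⟩
  have : R ≤ r := by
    by_contra hh
    exact hr2 ⟨hr, (not_le.mp hh).le⟩
  rw [if_neg (not_lt.mpr (hgR r this))]

lemma polar_aux {E : Type*} [NormedAddCommGroup E] [NormedSpace ℝ E] [MeasurableSpace E]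
    [BorelSpace E] [Nontrivial E] [FiniteDimensional ℝ E] (μ : Measure E) [μ.IsAddHaarMeasure]
    (f : E → ℝ) (hf : Integrable f μ) :
    ∫ y, f y ∂μ = ∫ θ : sphere (0:E) 1, (∫ r in Ioi (0:ℝ),
      r ^ (Module.finrank ℝ E - 1) * f (r • (θ : E))) ∂μ.toSphere := by
  have hme := (homeomorphUnitSphereProd E).measurableEmbedding
  have hmp := μ.measurePreserving_homeomorphUnitSphereProd
  let G : sphere (0:E) 1 × Ioi (0:ℝ) → ℝ := fun p => f (p.2.1 • p.1.1)
  have hG : ∀ y : ({(0:E)}ᶜ : Set E), G (homeomorphUnitSphereProd E y) = f y := by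
    intro y
    have hy : ‖(y:E)‖ ≠ 0 := norm_ne_zero_iff.mpr y.2
    simp only [G, homeomorphUnitSphereProd_apply_snd_coe, homeomorphUnitSphereProd_apply_fst_coe]
    rw [smul_smul, mul_inv_cancel₀ hy, one_smul]
  have hint : Integrable G (μ.toSphere.prod (.volumeIoiPow (Module.finrank ℝ E - 1))) := by
    rw [← hmp.integrable_comp_emb hme]
    have : G ∘ homeomorphUnitSphereProd E = f ∘ Subtype.val := funext hG
    rw [this, ← integrableOn_iff_comap_subtypeVal (by measurability)]
    exact hf.integrableOn
  calc
    ∫ y, f y ∂μ = ∫ y : ({(0)}ᶜ : Set E), f y.1 ∂(μ.comap (↑)) := by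
      rw [integral_subtype_comap (measurableSet_singleton _).compl fun x ↦ f x,
        restrict_compl_singleton]
    _ = ∫ p, G p ∂μ.toSphere.prod (.volumeIoiPow (Module.finrank ℝ E - 1)) := by
      rw [← hmp.integral_comp hme]
      simp only [hG]
    _ = ∫ θ, ∫ r, G (θ, r) ∂.volumeIoiPow (Module.finrank ℝ E - 1) ∂μ.toSphere :=
      integral_prod _ hint
    _ = _ := by
      congr 1
      ext θ
      simp only [Measure.volumeIoiPow, ENNReal.ofReal, G]
      rw [integral_withDensity_eq_integral_smul,
        integral_subtype_comap measurableSet_Ioi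
          fun a ↦ Real.toNNReal (a ^ (Module.finrank ℝ E - 1)) • f (a • (θ : E)),
        setIntegral_congr_fun measurableSet_Ioi fun x hx ↦ ?_]
      · simp only [NNReal.smul_def, Real.coe_toNNReal _ (pow_nonneg (mem_Ioi.mp hx).le _), smul_eq_mul]
      · exact (measurable_subtype_coe.pow_const _).real_toNNReal

/-- Lemma (reproducing identity): `χ_D Φ = ∇N * (χ_D ∇Φ)`. -/
theorem reproducing_identity_defining_function
    (d : ℕ) (hd : 2 ≤ d) (γ : ℝ) (hγ : γ ∈ Set.Ioo (0:ℝ) 1)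
    (D : Set (EuclideanSpace ℝ (Fin d))) (Φ : EuclideanSpace ℝ (Fin d) → ℝ)
    (hDo : IsOpen D) (hDb : Bornology.IsBounded D) (hΦ : IsDefining d γ D Φ)
    (x : EuclideanSpace ℝ (Fin d)) :
    IntegrableOn (fun y => ⟪gradN d (x - y), gradient Φ y⟫) D volume ∧
    Set.indicator D Φ x = ∫ y in D, ⟪gradN d (x - y), gradient Φ y⟫ := by
  obtain ⟨hC, -, hD, -, -⟩ := hΦ
  have : Nonempty (Fin d) := ⟨⟨0, by omega⟩⟩
  have : Nontrivial (EuclideanSpace ℝ (Fin d)) := inferInstance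
  have hgc : Continuous (gradient Φ) :=
    (InnerProductSpace.toDual ℝ _).symm.continuous.comp (hC.continuous_fderiv one_ne_zero)
  have hω : 0 < sphereVol d := by
    unfold sphereVol
    have h1 : 0 < (volume (Metric.ball (0 : EuclideanSpace ℝ (Fin d)) 1)).toReal :=
      ENNReal.toReal_pos (measure_ball_pos _ _ one_pos).ne' measure_ball_lt_top.ne
    have h2 : (0:ℝ) < d := by exact_mod_cast (by omega : 0 < d)
    positivity
  obtain ⟨R, hR0, hR⟩ : ∃ R : ℝ, 0 < R ∧ ∀ y ∈ D, ‖y - x‖ < R := by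
    obtain ⟨R, hR⟩ := hDb.subset_ball x
    refine ⟨max R 1, by positivity, fun y hy => ?_⟩
    have := hR hy
    rw [mem_ball, dist_eq_norm] at this
    exact lt_of_lt_of_le this (le_max_left _ _)
  obtain ⟨M, hM0, hM⟩ : ∃ M : ℝ, 0 ≤ M ∧ ∀ y ∈ D, ‖gradient Φ y‖ ≤ M := by
    obtain ⟨M, hM⟩ := (hDb.isCompact_closure).exists_bound_of_continuousOn hgc.continuousOn
    exact ⟨max M 0, le_max_right _ _, fun y hy => (hM y (subset_closure hy)).trans (le_max_left _ _)⟩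
  -- shifted integrand
  set F : EuclideanSpace ℝ (Fin d) → ℝ :=
    D.indicator (fun y => ⟪gradN d (x - y), gradient Φ y⟫) with hF
  have hgN : Measurable (gradN d) := by
    unfold gradN
    fun_prop
  have hFm : Measurable F := by
    refine Measurable.indicator ?_ hDo.measurableSet
    exact (hgN.comp (measurable_const.sub measurable_id)).inner hgc.measurable
  have hnorm : ∀ z : EuclideanSpace ℝ (Fin d), ‖gradN d z‖ = (sphereVol d)⁻¹ * ((‖z‖ ^ d)⁻¹ * ‖z‖) := by
    intro z
    unfold gradN
    rw [norm_smul, norm_inv, Real.norm_of_nonneg (by positivity), mul_inv, mul_assoc]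
  have hbd : Integrable (fun z : EuclideanSpace ℝ (Fin d) =>
      (Iio R).indicator (fun r : ℝ => (sphereVol d)⁻¹ * ((r ^ d)⁻¹ * r) * M) ‖z‖) volume := by
    rw [integrable_fun_norm_addHaar volume
      (f := (Iio R).indicator (fun r : ℝ => (sphereVol d)⁻¹ * ((r ^ d)⁻¹ * r) * M))]
    have h0 : IntegrableOn (fun r : ℝ => (Iio R).indicator (fun _ => (sphereVol d)⁻¹ * M) r)
        (Ioi 0) := by
      rw [IntegrableOn, integrable_indicator_iff measurableSet_Iio, IntegrableOn,
        Measure.restrict_restrict measurableSet_Iio, Iio_inter_Ioi]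
      exact integrableOn_const (by simp)
    refine h0.congr_fun (fun r hr => ?_) measurableSet_Ioi
    have hr : (0:ℝ) < r := hr
    simp only [finrank_euclideanSpace, Fintype.card_fin, smul_eq_mul, indicator]
    split_ifs
    · obtain ⟨k, rfl⟩ : ∃ k, d = k + 1 := ⟨d - 1, by omega⟩
      simp only [Nat.add_sub_cancel]
      field_simp
      ring
    · simp
  have hFi' : Integrable (fun z => F (x + z)) volume := by
    refine hbd.mono' (hFm.comp (measurable_const.add measurable_id)).aestronglyMeasurable
      (Filter.Eventually.of_forall fun z => ?_)
    by_cases hz : x + z ∈ D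
    · have h1 : ‖z‖ < R := by simpa using hR _ hz
      simp only [hF, indicator_of_mem hz]
      rw [indicator_of_mem (by exact h1)]
      refine (norm_inner_le_norm _ _).trans ?_
      rw [hnorm]
      have h2 : ‖x - (x + z)‖ = ‖z‖ := by simp
      rw [h2]
      exact mul_le_mul_of_nonneg_left (hM _ hz) (by positivity)
    · simp only [hF, indicator_of_notMem hz, norm_zero]
      refine indicator_apply_nonneg fun _ => ?_
      positivity
  have hFi : Integrable F volume := by
    have := hFi'.comp_add_left (-x)
    simpa using this
  refine ⟨(integrable_indicator_iff hDo.measurableSet).mp hFi, ?_⟩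
  rw [← integral_indicator hDo.measurableSet]
  change _ = ∫ y, F y
  rw [← integral_add_left_eq_self F x, polar_aux volume _ hFi']
  have hin : ∀ θ : sphere (0 : EuclideanSpace ℝ (Fin d)) 1,
      ∫ r in Ioi (0:ℝ), r ^ (Module.finrank ℝ (EuclideanSpace ℝ (Fin d)) - 1) *
        F (x + r • (θ : EuclideanSpace ℝ (Fin d))) = (sphereVol d)⁻¹ * D.indicator Φ x := by
    intro θ
    have hθ : ‖(θ : EuclideanSpace ℝ (Fin d))‖ = 1 := by simp
    set g : ℝ → ℝ := fun r => Φ (x + r • (θ : EuclideanSpace ℝ (Fin d))) with hgdef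
    have hg : ContDiff ℝ 1 g := hC.comp (by fun_prop)
    have hgd : ∀ r, deriv g r =
        ⟪(θ : EuclideanSpace ℝ (Fin d)), gradient Φ (x + r • (θ : EuclideanSpace ℝ (Fin d)))⟫ := by
      intro r
      have h1 : HasDerivAt (fun r : ℝ => x + r • (θ : EuclideanSpace ℝ (Fin d)))
          (θ : EuclideanSpace ℝ (Fin d)) r := by
        simpa using ((hasDerivAt_id r).smul_const (θ : EuclideanSpace ℝ (Fin d))).const_add x
      have h2 := ((hC.differentiable one_ne_zero _).hasFDerivAt.comp_hasDerivAt r h1).deriv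
      rw [real_inner_comm, inner_gradient_left]
      exact h2
    have h1 := one_dim_aux g hg R hR0 (by
      intro r hr
      by_contra hlt
      have hmem : x + r • (θ : EuclideanSpace ℝ (Fin d)) ∈ D := by
        rw [hD]; exact not_le.mp hlt
      have := hR _ hmem
      rw [add_sub_cancel_left, norm_smul, hθ, mul_one, Real.norm_of_nonneg (hR0.le.trans hr)] at this
      linarith)
    have h2 : D.indicator Φ x = min (g 0) 0 := by
      simp only [hgdef, zero_smul, add_zero, hD, indicator, mem_ofPred_eq]
      split_ifs with h
      · exact (min_eq_left h.le).symm
      · exact (min_eq_right (not_lt.mp h)).symm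
    have h3 : (sphereVol d)⁻¹ * D.indicator Φ x = ∫ r in Ioi (0:ℝ),
        (-(sphereVol d)⁻¹) * (if g r < 0 then deriv g r else 0) := by
      rw [integral_const_mul, h1, h2]; ring
    rw [h3]
    refine setIntegral_congr_fun measurableSet_Ioi fun r hr => ?_
    have hr : (0:ℝ) < r := hr
    have hiff : x + r • (θ : EuclideanSpace ℝ (Fin d)) ∈ D ↔ g r < 0 := by rw [hD]; rfl
    simp only [hF, indicator, hiff]
    split_ifs with h
    · rw [hgd]
      have h4 : x - (x + r • (θ : EuclideanSpace ℝ (Fin d))) =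
        (-r) • (θ : EuclideanSpace ℝ (Fin d)) := by simp
      rw [h4, gradN, norm_smul, hθ, inner_smul_left, inner_smul_left]
      simp only [finrank_euclideanSpace, Fintype.card_fin, norm_neg, Real.norm_of_nonneg hr.le,
        mul_one, conj_trivial]
      obtain ⟨k, rfl⟩ : ∃ k, d = k + 1 := ⟨d - 1, by omega⟩
      simp only [Nat.add_sub_cancel]
      field_simp
      ring
    · simp
  simp only [hin]
  rw [integral_const, Measure.toSphere_real_apply_univ]
  have : (Module.finrank ℝ (EuclideanSpace ℝ (Fin d)) : ℝ) *
      (volume : Measure (EuclideanSpace ℝ (Fin d))).real (ball 0 1) = sphereVol d := by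
    simp [sphereVol, Measure.real]
  rw [this, smul_eq_mul, mul_inv_cancel_left₀ hω.ne']
end
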